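/- arXiv:math/0505430 — 7 statements merged into one kernel-verified Lean document; each statement's English description precedes it below -/
import Mathlib

section
/- Let (Z, d) be a separable metric space and F ⊆ Z a nonempty closed subset. Then there exists a Borel measurable map ψ : Z → Z such that ψ(z) ∈ F for every z ∈ Z and d(ψ(z), z) ≤ 2·d(z, F) for every z ∈ Z, where d(z, F) := inf_{w∈F} d(z, w). -/
open Metric

/-!
Fix a sequence `u` dense in `F`. On `F` take the identity. Off `F` the distance `d(z, F)` is
positive because `F` is closed, so some `u n` satisfies `d(u n, z) < 2 d(z, F)`; send `z` to the
`u n` with the least such `n`. The map is Borel because for each `n` the set of `z` satisfying this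
inequality is open.
-/

/-- For a nonempty closed subset `F` of a separable metric space `Z`, there is a Borel
measurable map `ψ : Z → Z` taking values in `F` with `d(ψ z, z) ≤ 2 d(z, F)`. -/
theorem stmt_0 {Z : Type*} [MetricSpace Z]
    [TopologicalSpace.SeparableSpace Z] [MeasurableSpace Z] [BorelSpace Z]
    (F : Set Z) (hF : IsClosed F) (hne : F.Nonempty) :
    ∃ ψ : Z → Z, Measurable ψ ∧ (∀ z, ψ z ∈ F) ∧
      ∀ z, dist (ψ z) z ≤ 2 * Metric.infDist z F := by
  classical
  have : Nonempty F := hne.to_subtype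
  -- Second countability, unlike separability, passes to the subspace `F`.
  have : SecondCountableTopology Z := UniformSpace.secondCountable_of_separable Z
  obtain ⟨u, hu⟩ := TopologicalSpace.exists_dense_seq F
  have h : ∀ z, ∃ n, z ∈ F ∨ dist (u n : Z) z < 2 * infDist z F := by
    intro z
    by_cases hz : z ∈ F
    · exact ⟨0, Or.inl hz⟩
    have hpos : 0 < infDist z F := (hF.notMem_iff_infDist_pos hne).1 hz
    obtain ⟨w, hw, hwz⟩ := (infDist_lt_iff (x := z) (r := 2 * infDist z F) hne).1 (by linarith)
    obtain ⟨n, hn⟩ := hu.exists_dist_lt ⟨w, hw⟩ (sub_pos.2 hwz)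
    refine ⟨n, Or.inr ?_⟩
    have h1 : dist w (u n : Z) < 2 * infDist z F - dist z w := hn
    have h2 := dist_triangle (u n : Z) w z
    rw [dist_comm (u n : Z) w, dist_comm w z] at h2
    linarith
  refine ⟨fun z => if z ∈ F then z else (u (Nat.find (h z)) : Z), ?_, fun z => ?_, fun z => ?_⟩
  · refine Measurable.find (f := fun n z => if z ∈ F then z else (u n : Z))
      (fun n => Measurable.ite hF.measurableSet measurable_id measurable_const) (fun n => ?_) h
    exact hF.measurableSet.union (isOpen_lt (continuous_const.dist continuous_id)
      (continuous_const.mul (continuous_infDist_pt F))).measurableSet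
  · dsimp only
    split_ifs with hz
    · exact hz
    · exact (u _).2
  · dsimp only
    split_ifs with hz
    · simpa using infDist_nonneg
    · exact ((Nat.find_spec (h z)).resolve_left hz).le
end

section
/- Let (X_i, o_i)_{i∈ℕ} be a sequence of pointed proper metric spaces converging to a pointed proper metric space (X, o) in the pointed Gromov–Hausdorff sense. Then there exists a metric d_𝒳 on the disjoint union 𝒳 := (⨆_{i∈ℕ} X_i) ⊔ X such that: (1) the restriction of d_𝒳 to each X_i equals d_{X_i} and the restriction to X equals d_X; (2) (𝒳, d_𝒳) is a proper metric space; (3) X_i converges to X in the compact Hausdorff sense inside (𝒳, d_𝒳); and (4) d_𝒳(o_i, o) → 0. -/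
/-!
Each `X i` is glued to `Y` along an almost isometry `φ` of a large ball, the distance from `x` to
`y` being the infimum of `d(x, a) + ε + d(φ a, y)`; by a diagonal choice (`exists_glueFun_seq`) the
radii of these balls tend to infinity and the errors `ε` to zero. Points of different `X i` and
`X j` are joined by shortest paths through `Y`; this is a metric (`AmalgData.metricSpace`).
It is proper because a bounded sequence that leaves every finite union of the `X i` approaches
bounded subsets of `Y` (`properSpace_of_pieces`).

For the Hausdorff convergence of balls around `p`, of radius `r` in `Y` and `r i` in `X i`, the
`r i` are those of the hypothesis at radius `r`. Points of `ball p r` are approximated through the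
gluing (`eventually_ball_close_left`). Conversely, a point of `X i` whose distance to the base
point is less than `r i` could, for large `i`, be far from `ball p r` only if `ball p r` contained
a separated family larger than a maximal one (`eventually_ball_close_right`). Here it matters that
gluing never makes a point closer to `p` than it is to `o i`.
-/

open Filter Topology Metric Set ENNReal

universe u v

/-- Pointed Gromov-Hausdorff convergence of `(X i, o i)` to `(Y, p)`: for every `r > 0`
there are `r_i → r` with `r_i ≥ r`, `ε_i → 0+` and maps `φ i : B(o i, r i) → B(p, r)`
with `φ i (o i) = p`, distortion `< ε i` on `B(o i, r i)`, and `ε i`-dense image. -/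
def PointedGHConv (X : ℕ → Type u) (Y : Type v)
    [∀ i, MetricSpace (X i)] [MetricSpace Y]
    (o : ∀ i, X i) (p : Y) : Prop :=
  ∀ r > (0:ℝ), ∃ (ri εi : ℕ → ℝ) (φ : ∀ i, X i → Y),
    (∀ i, r ≤ ri i) ∧ Tendsto ri atTop (nhds r) ∧
    (∀ i, 0 < εi i) ∧ Tendsto εi atTop (nhds 0) ∧
    (∀ i, φ i (o i) = p) ∧
    (∀ i, ∀ x ∈ Metric.ball (o i) (ri i), φ i x ∈ Metric.ball p r) ∧
    (∀ i, ∀ x ∈ Metric.ball (o i) (ri i), ∀ y ∈ Metric.ball (o i) (ri i),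
      |dist (φ i x) (φ i y) - dist x y| < εi i) ∧
    (∀ i, ∀ y ∈ Metric.ball p r, ∃ x ∈ Metric.ball (o i) (ri i),
      dist y (φ i x) < εi i)

/-- The conclusion: `m` is a metric on the disjoint union extending the metrics of the
pieces, which is proper, for which `X i → Y` in the compact Hausdorff sense, and
`o i → p`. -/
def GoodGlueMetric (X : ℕ → Type u) (Y : Type v)
    [∀ i, MetricSpace (X i)] [MetricSpace Y]
    (o : ∀ i, X i) (p : Y)
    (m : MetricSpace ((Σ i, X i) ⊕ Y)) : Prop :=
  letI := m
  (∀ (i : ℕ) (x x' : X i),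
      dist (Sum.inl ⟨i, x⟩ : (Σ i, X i) ⊕ Y) (Sum.inl ⟨i, x'⟩) = dist x x') ∧
  (∀ y y' : Y,
      dist (Sum.inr y : (Σ i, X i) ⊕ Y) (Sum.inr y') = dist y y') ∧
  ProperSpace ((Σ i, X i) ⊕ Y) ∧
  (∃ q : (Σ i, X i) ⊕ Y, ∀ r > (0:ℝ), ∃ ri : ℕ → ℝ,
    (∀ i, r ≤ ri i) ∧ Tendsto ri atTop (nhds r) ∧
    Tendsto (fun i => Metric.hausdorffDist
        ((Set.range fun x : X i => (Sum.inl ⟨i, x⟩ : (Σ i, X i) ⊕ Y))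
          ∩ Metric.ball q (ri i))
        (Set.range (Sum.inr : Y → (Σ i, X i) ⊕ Y) ∩ Metric.ball q r))
      atTop (nhds 0)) ∧
  Tendsto (fun i => dist (Sum.inl ⟨i, o i⟩ : (Σ i, X i) ⊕ Y) (Sum.inr p))
    atTop (nhds 0)

/-! ### Amalgamating metric spaces along a common one -/

section Glue

variable {Z : Type*} {K : Type*} {Y : Type*} [MetricSpace Y]

open Classical in
/-- The amalgamated distance on a space `Z` partitioned by `c : Z → K`: inside a part it is `d₀`,
and between two parts it is the length of the shortest path through `Y`, where `f a y` is the
prescribed distance from `a : Z` to `y : Y`. -/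
noncomputable def amalgDist (c : Z → K) (d₀ : Z → Z → ℝ) (f : Z → Y → ℝ) (a b : Z) : ℝ :=
  if c a = c b then d₀ a b else ⨅ y, f a y + f b y

/-- The compatibility conditions under which `amalgDist c d₀ f` is a metric: `d₀` is a metric on
each part, and `d₀`, `f` and the distance of `Y` satisfy the triangle inequalities that involve a
single part and `Y`. Distinct parts stay a positive distance apart by `sep`. -/
structure AmalgData (c : Z → K) (d₀ : Z → Z → ℝ) (f : Z → Y → ℝ) : Prop where
  self : ∀ a, d₀ a a = 0
  symm : ∀ a b, c a = c b → d₀ a b = d₀ b a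
  tri : ∀ a b e, c a = c b → c b = c e → d₀ a e ≤ d₀ a b + d₀ b e
  eq : ∀ a b, c a = c b → d₀ a b = 0 → a = b
  lip : ∀ a y y', f a y ≤ f a y' + dist y' y
  le_add : ∀ a y y', dist y y' ≤ f a y + f a y'
  lip' : ∀ a b y, c a = c b → f a y ≤ d₀ a b + f b y
  le_add' : ∀ a b y, c a = c b → d₀ a b ≤ f a y + f b y
  sep : ∀ a b, c a ≠ c b → ∃ e > 0, ∀ y, e ≤ f a y + f b y

variable {c : Z → K} {d₀ : Z → Z → ℝ} {f : Z → Y → ℝ}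

lemma AmalgData.nonneg (h : AmalgData c d₀ f) (a : Z) (y : Y) : 0 ≤ f a y := by
  have := h.le_add a y y
  rw [dist_self] at this
  linarith

lemma AmalgData.ciInf_le (h : AmalgData c d₀ f) (a b : Z) (y : Y) :
    ⨅ y, f a y + f b y ≤ f a y + f b y :=
  _root_.ciInf_le ⟨0, by rintro _ ⟨y, rfl⟩; exact add_nonneg (h.nonneg a y) (h.nonneg b y)⟩ y

lemma AmalgData.triangle [Nonempty Y] (h : AmalgData c d₀ f) (a b e : Z) :
    amalgDist c d₀ f a e ≤ amalgDist c d₀ f a b + amalgDist c d₀ f b e := by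
  unfold amalgDist
  by_cases hab : c a = c b
  · by_cases hbe : c b = c e
    · rw [if_pos hab, if_pos hbe, if_pos (hab.trans hbe)]
      exact h.tri a b e hab hbe
    · rw [if_pos hab, if_neg hbe, if_neg (fun h' => hbe (hab.symm.trans h')), ← sub_le_iff_le_add']
      refine le_ciInf fun y => ?_
      have := h.ciInf_le a e y
      have := h.lip' a b y hab
      linarith
  · by_cases hbe : c b = c e
    · rw [if_neg hab, if_pos hbe, if_neg (fun h' => hab (h'.trans hbe.symm)), ← sub_le_iff_le_add]
      refine le_ciInf fun y => ?_
      have := h.ciInf_le a e y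
      have := h.lip' e b y hbe.symm
      have := h.symm b e hbe
      linarith
    · rw [if_neg hab, if_neg hbe, ← sub_le_iff_le_add']
      refine le_ciInf fun y' => ?_
      rw [sub_le_iff_le_add', ← sub_le_iff_le_add]
      refine le_ciInf fun y => ?_
      have h1 := h.le_add b y y'
      have h2 := h.lip e y y'
      rw [dist_comm] at h2
      split_ifs with hae
      · have := h.le_add' a e y hae
        linarith
      · have := h.ciInf_le a e y
        linarith

/-- The amalgamated metric space. -/
@[reducible] noncomputable def AmalgData.metricSpace [Nonempty Y] (h : AmalgData c d₀ f) :
    MetricSpace Z where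
  dist := amalgDist c d₀ f
  dist_self a := by simp [amalgDist, h.self]
  dist_comm a b := by
    unfold amalgDist
    by_cases hab : c a = c b
    · rw [if_pos hab, if_pos hab.symm, h.symm a b hab]
    · rw [if_neg hab, if_neg (Ne.symm hab)]
      simp only [add_comm]
  dist_triangle := h.triangle
  eq_of_dist_eq_zero {a b} hd := by
    change amalgDist c d₀ f a b = 0 at hd
    unfold amalgDist at hd
    split_ifs at hd with hab
    · exact h.eq a b hab hd
    · obtain ⟨e, he, hf⟩ := h.sep a b hab
      have := le_ciInf hf
      linarith

end Glue

/-! ### Gluing one space to the limit along an approximation -/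

/-- `F x y` is an admissible distance between points `x : X` and `y : Y`: together with the metrics
of `X` and `Y` it satisfies every triangle inequality, and it is bounded below by `ε`. Moreover
the base points `o`, `p` are `ε`-close, `F · p` dominates the distance to `o`, and the balls of
radius `n` in either space lie within `2 * ε` of the other space. -/
structure GlueFun {X : Type u} {Y : Type v} [MetricSpace X] [MetricSpace Y] (o : X) (p : Y)
    (n ε : ℝ) (F : X → Y → ℝ) : Prop where
  lip : ∀ x y y', F x y ≤ F x y' + dist y' y
  lip' : ∀ x x' y, F x y ≤ dist x x' + F x' y
  le_add : ∀ x y y', dist y y' ≤ F x y + F x y'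
  le_add' : ∀ x x' y, dist x x' ≤ F x y + F x' y
  lower : ∀ x y, ε ≤ F x y
  base : F o p ≤ ε
  dist_le : ∀ x, dist x o ≤ F x p
  exists_right : ∀ x ∈ ball o n, ∃ y, F x y ≤ 2 * ε
  exists_left : ∀ y ∈ ball p n, ∃ x, F x y ≤ 2 * ε

/-- A map `φ` on `A ∋ o` with distortion at most `ε`, where `A` contains `ball o n` and the image
of `A` is `ε`-dense in `ball p n`, glues the two spaces: the distance from `x` to `y` is the
infimum over `a ∈ A` of `d(x, a) + ε + d(φ a, y)`. Using `ε` rather than `ε / 2` for the jump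
makes `F · p` dominate the distance to `o`. -/
lemma exists_glueFun {X : Type u} {Y : Type v} [MetricSpace X] [MetricSpace Y] {o : X} {p : Y}
    {n ε : ℝ} (hε : 0 < ε) (A : Set X) (φ : X → Y) (ho : o ∈ A) (hφ : φ o = p)
    (hdis : ∀ x ∈ A, ∀ y ∈ A, |dist (φ x) (φ y) - dist x y| ≤ ε)
    (hA : ball o n ⊆ A) (hdense : ∀ y ∈ ball p n, ∃ x ∈ A, dist y (φ x) ≤ ε) :
    ∃ F : X → Y → ℝ, GlueFun o p n ε F := by
  set F : X → Y → ℝ := fun x y => ⨅ a : A, (dist x a + ε + dist (φ a) y) with hF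
  have : Nonempty A := ⟨⟨o, ho⟩⟩
  have hle : ∀ x y, ∀ a ∈ A, F x y ≤ dist x a + ε + dist (φ a) y := fun x y a ha =>
    ciInf_le (f := fun a : A => dist x a + ε + dist (φ a) y)
      ⟨0, by rintro _ ⟨a, rfl⟩; positivity⟩ ⟨a, ha⟩
  have hge : ∀ x y t, (∀ a ∈ A, t ≤ dist x a + ε + dist (φ a) y) → t ≤ F x y :=
    fun x y t ht => le_ciInf fun a => ht a a.2
  refine ⟨F, ⟨?_, ?_, ?_, ?_, ?_, ?_, ?_, ?_, ?_⟩⟩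
  · intro x y y'
    rw [← sub_le_iff_le_add]
    refine hge _ _ _ fun a ha => ?_
    have := hle x y a ha
    have := dist_triangle (φ a) y' y
    linarith
  · intro x x' y
    rw [← sub_le_iff_le_add']
    refine hge _ _ _ fun a ha => ?_
    have := hle x y a ha
    have := dist_triangle x x' a
    linarith
  · intro x y y'
    rw [← sub_le_iff_le_add']
    refine hge _ _ _ fun b hb => ?_
    rw [sub_le_comm]
    refine hge _ _ _ fun a ha => ?_
    have h1 := abs_le.1 (hdis a ha b hb)
    have h2 := dist_triangle4 y (φ a) (φ b) y'
    have h3 := dist_triangle a x b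
    rw [dist_comm y (φ a)] at h2
    rw [dist_comm a x] at h3
    linarith
  · intro x x' y
    rw [← sub_le_iff_le_add']
    refine hge _ _ _ fun b hb => ?_
    rw [sub_le_comm]
    refine hge _ _ _ fun a ha => ?_
    have h1 := abs_le.1 (hdis a ha b hb)
    have h2 := dist_triangle4 x a b x'
    have h3 := dist_triangle (φ a) y (φ b)
    rw [dist_comm b x'] at h2
    rw [dist_comm y] at h3
    linarith
  · intro x y
    refine hge _ _ _ fun a ha => ?_
    have := dist_nonneg (x := x) (y := a)
    have := dist_nonneg (x := φ a) (y := y)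
    linarith
  · simpa [hφ] using hle o p o ho
  · intro x
    refine hge _ _ _ fun a ha => ?_
    have h1 := abs_le.1 (hdis a ha o ho)
    have h2 := dist_triangle x a o
    rw [hφ] at h1
    linarith
  · intro x hx
    refine ⟨φ x, ?_⟩
    have := hle x (φ x) x (hA hx)
    simp only [dist_self] at this
    linarith
  · intro y hy
    obtain ⟨x, hx, hd⟩ := hdense y hy
    refine ⟨x, ?_⟩
    have := hle x y x hx
    rw [dist_self, dist_comm] at this
    linarith

/-- Diagonal choice: radii `n i → ∞` and errors `1 / (n i + 1) → 0` for which `X i` can be glued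
to `Y`. -/
lemma exists_glueFun_seq {X : ℕ → Type u} {Y : Type v}
    [∀ i, MetricSpace (X i)] [MetricSpace Y] {o : ∀ i, X i} {p : Y}
    (h : PointedGHConv X Y o p) :
    ∃ (n : ℕ → ℕ) (F : ∀ i, X i → Y → ℝ), Tendsto n atTop atTop ∧
      ∀ i, GlueFun (o i) p (n i) (1 / ((n i : ℝ) + 1)) (F i) := by
  classical
  let P : ℕ → ℕ → Prop := fun i n =>
    ∃ F : X i → Y → ℝ, GlueFun (o i) p (n : ℝ) (1 / ((n : ℝ) + 1)) F
  have h0 : ∀ i, P i 0 := by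
    intro i
    refine exists_glueFun (by positivity) {o i} (fun _ => p) rfl rfl ?_ ?_ ?_
    · rintro x rfl y rfl
      simp
    · simp
    · simp
  have hev : ∀ n, ∀ᶠ i in atTop, P i n := by
    intro n
    rcases Nat.eq_zero_or_pos n with rfl | hn
    · exact Eventually.of_forall h0
    obtain ⟨ri, εi, φ, hri, -, -, hε, hφ, -, hdis, hdense⟩ := h n (by exact_mod_cast hn)
    have hpos : (0 : ℝ) < 1 / ((n : ℝ) + 1) := by positivity
    filter_upwards [hε.eventually (gt_mem_nhds hpos)] with i hi
    refine exists_glueFun hpos (ball (o i) (ri i)) (φ i) ?_ (hφ i) ?_ (ball_subset_ball (hri i)) ?_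
    · exact mem_ball_self (lt_of_lt_of_le (by exact_mod_cast hn) (hri i))
    · exact fun x hx y hy => ((hdis i x hx y hy).trans hi).le
    · intro y hy
      obtain ⟨x, hx, hd⟩ := hdense i y hy
      exact ⟨x, hx, (hd.trans hi).le⟩
  have hspec : ∀ i, P i (Nat.findGreatest (P i) i) := fun i =>
    Nat.findGreatest_spec (Nat.zero_le i) (h0 i)
  choose F hF using hspec
  refine ⟨fun i => Nat.findGreatest (P i) i, F, ?_, hF⟩
  refine tendsto_atTop.2 fun n => ?_
  filter_upwards [hev n, eventually_ge_atTop n] with i hi hni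
  exact Nat.le_findGreatest hni hi

/-! ### Packing and closeness of balls -/

/-- In a totally bounded set there is an `s`-separated family of maximal cardinality. -/
lemma exists_maximal_separated {Y : Type v} [MetricSpace Y] {B : Set Y} (hB : TotallyBounded B)
    {s : ℝ} (hs : 0 < s) :
    ∃ N : ℕ, (∃ g : Fin N → Y, (∀ j, g j ∈ B) ∧ ∀ j k, j ≠ k → s < dist (g j) (g k)) ∧
      ¬ ∃ g : Fin (N + 1) → Y, (∀ j, g j ∈ B) ∧ ∀ j k, j ≠ k → s < dist (g j) (g k) := by
  by_contra! hcon
  have hall : ∀ N : ℕ, ∃ g : Fin N → Y, (∀ j, g j ∈ B) ∧ ∀ j k, j ≠ k → s < dist (g j) (g k) := by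
    intro N
    induction N with
    | zero => exact ⟨fun j => j.elim0, fun j => j.elim0, fun j => j.elim0⟩
    | succ N ih => exact hcon N ih
  obtain ⟨t, htf, ht⟩ := Metric.totallyBounded_iff.1 hB (s / 2) (by positivity)
  -- A family with more members than there are balls of radius `s / 2` in a cover has two
  -- members in the same ball.
  have : Fintype t := htf.fintype
  obtain ⟨g, hgB, hg⟩ := hall (Fintype.card t + 1)
  have hch : ∀ j, ∃ z : t, dist (g j) z < s / 2 := by
    intro j
    obtain ⟨z, hz, hd⟩ := mem_iUnion₂.1 (ht (hgB j))
    exact ⟨⟨z, hz⟩, hd⟩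
  choose z hz using hch
  obtain ⟨j, k, hjk, hzz⟩ := Fintype.exists_ne_map_eq_of_card_lt z (by simp)
  have h1 := hz j
  have h2 := hz k
  rw [← hzz, dist_comm] at h2
  have := dist_triangle (g j) (z j) (g k)
  linarith [hg j k hjk]

section Close

variable {X : ℕ → Type u} {Y : Type v} [∀ i, MetricSpace (X i)] [MetricSpace Y]
  {o : ∀ i, X i} {p : Y} {n : ℕ → ℕ} {F : ∀ i, X i → Y → ℝ}

lemma tendsto_glue_error (hn : Tendsto n atTop atTop) :
    Tendsto (fun i => 2 * (1 / ((n i : ℝ) + 1))) atTop (𝓝 0) := by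
  simpa using ((tendsto_one_div_add_atTop_nhds_zero_nat (𝕜 := ℝ)).comp hn).const_mul 2

lemma eventually_exists_left (hn : Tendsto n atTop atTop)
    (hF : ∀ i, GlueFun (o i) p (n i) (1 / ((n i : ℝ) + 1)) (F i)) (y : Y) {δ : ℝ} (hδ : 0 < δ) :
    ∀ᶠ i in atTop, ∃ x, F i x y < δ := by
  have hn' : Tendsto (fun i => (n i : ℝ)) atTop atTop := tendsto_natCast_atTop_atTop.comp hn
  filter_upwards [(tendsto_glue_error hn).eventually (gt_mem_nhds hδ),
    hn'.eventually_gt_atTop (dist y p)] with i hi hi'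
  obtain ⟨x, hx⟩ := (hF i).exists_left y hi'
  exact ⟨x, hx.trans_lt hi⟩

lemma eventually_exists_right (hn : Tendsto n atTop atTop)
    (hF : ∀ i, GlueFun (o i) p (n i) (1 / ((n i : ℝ) + 1)) (F i)) (R : ℝ) {δ : ℝ} (hδ : 0 < δ) :
    ∀ᶠ i in atTop, ∀ x, F i x p ≤ R → ∃ y, F i x y < δ := by
  have hn' : Tendsto (fun i => (n i : ℝ)) atTop atTop := tendsto_natCast_atTop_atTop.comp hn
  filter_upwards [(tendsto_glue_error hn).eventually (gt_mem_nhds hδ),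
    hn'.eventually_gt_atTop R] with i hi hi' x hx
  obtain ⟨y, hy⟩ := (hF i).exists_right x ((((hF i).dist_le x).trans hx).trans_lt hi')
  exact ⟨y, hy.trans_lt hi⟩

/-- Every point of `ball p r` is, uniformly, close to a point of `X i` in the ball of radius `r`
around `p`. The ball being open, the points of a finite net have room to be approximated inside
it. -/
lemma eventually_ball_close_left [ProperSpace Y] (hn : Tendsto n atTop atTop)
    (hF : ∀ i, GlueFun (o i) p (n i) (1 / ((n i : ℝ) + 1)) (F i)) (r : ℝ) {η : ℝ} (hη : 0 < η) :
    ∀ᶠ i in atTop, ∀ y ∈ ball p r, ∃ x, F i x p < r ∧ F i x y ≤ η := by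
  have htb : TotallyBounded (ball p r) :=
    (isCompact_closedBall p r).totallyBounded.subset ball_subset_closedBall
  obtain ⟨t, htB, htf, ht⟩ := Metric.finite_approx_of_totallyBounded htb (η / 2) (by positivity)
  have hev : ∀ᶠ i in atTop, ∀ z ∈ t, ∃ x, F i x z < min (η / 2) (r - dist z p) := by
    rw [htf.eventually_all]
    intro z hz
    exact eventually_exists_left hn hF z (lt_min (by positivity) (sub_pos.2 (htB hz)))
  filter_upwards [hev] with i hi y hy
  obtain ⟨z, hz, hyz⟩ := mem_iUnion₂.1 (ht hy)
  obtain ⟨x, hx⟩ := hi z hz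
  obtain ⟨hx1, hx2⟩ := lt_min_iff.1 hx
  refine ⟨x, ?_, ?_⟩
  · linarith [(hF i).lip x p z]
  · have := (hF i).lip x y z
    rw [mem_ball, dist_comm] at hyz
    linarith

/-- The points of `X i` in the ball of radius `ri i` are close to `ball p r`. The gluing maps are
unrelated to the maps `φ` witnessing the convergence at radius `r`, so this needs an argument:
a point of `X i` far from `ball p r` could be added to an approximation in `X i` of a maximal
separated family of `ball p r`, and `φ i` would carry the result to a larger separated family
of `ball p r`. -/
lemma eventually_ball_close_right [ProperSpace Y] (hn : Tendsto n atTop atTop)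
    (hF : ∀ i, GlueFun (o i) p (n i) (1 / ((n i : ℝ) + 1)) (F i)) {r : ℝ} {ri εi : ℕ → ℝ}
    {φ : ∀ i, X i → Y} (hri : ∀ i, r ≤ ri i) (hε : Tendsto εi atTop (𝓝 0))
    (hmap : ∀ i, ∀ x ∈ ball (o i) (ri i), φ i x ∈ ball p r)
    (hdis : ∀ i, ∀ x ∈ ball (o i) (ri i), ∀ y ∈ ball (o i) (ri i),
      |dist (φ i x) (φ i y) - dist x y| < εi i) {η : ℝ} (hη : 0 < η) :
    ∀ᶠ i in atTop, ∀ x, F i x p < ri i → ∃ y ∈ ball p r, F i x y ≤ η := by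
  have htb : TotallyBounded (ball p r) :=
    (isCompact_closedBall p r).totallyBounded.subset ball_subset_closedBall
  obtain ⟨N, ⟨g, hgB, hg⟩, hmax⟩ := exists_maximal_separated htb (half_pos hη)
  -- A margin by which the finite family `g` is more than `η / 2`-separated.
  obtain ⟨δ, hδ, hδη, hgδ⟩ : ∃ δ > 0, 3 * δ ≤ η / 2 ∧
      ∀ j k, j ≠ k → η / 2 + 3 * δ ≤ dist (g j) (g k) := by
    have hev : ∀ᶠ δ in 𝓝[>] (0 : ℝ), ∀ j k, j ≠ k → η / 2 + 3 * δ ≤ dist (g j) (g k) := by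
      refine eventually_all.2 fun j => eventually_all.2 fun k => ?_
      by_cases hjk : j = k
      · simp [hjk]
      have hlt := hg j k hjk
      filter_upwards [Ioo_mem_nhdsGT (show (0 : ℝ) < (dist (g j) (g k) - η / 2) / 3 by linarith)]
        with δ hδ _
      linarith [hδ.2]
    obtain ⟨δ, h1, h2⟩ :=
      (hev.and (Ioo_mem_nhdsGT (show (0 : ℝ) < η / 6 by positivity))).exists
    exact ⟨δ, h2.1, by linarith [h2.2], h1⟩
  have hev : ∀ᶠ i in atTop, ∀ j, ∃ x, F i x (g j) < min δ (r - dist (g j) p) :=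
    eventually_all.2 fun j =>
      eventually_exists_left hn hF (g j) (lt_min hδ (sub_pos.2 (hgB j)))
  filter_upwards [hev, hε.eventually (gt_mem_nhds hδ)] with i hi hεδ x hx
  by_contra! hcon
  choose z hz using hi
  have hz1 : ∀ j, F i (z j) (g j) < δ := fun j => (lt_min_iff.1 (hz j)).1
  have hz2 : ∀ j, F i (z j) (g j) < r - dist (g j) p := fun j => (lt_min_iff.1 (hz j)).2
  let w : Fin (N + 1) → X i := Fin.cons x z
  have hw : ∀ j, w j ∈ ball (o i) (ri i) := by
    refine Fin.cases ?_ fun j => ?_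
    · exact ((hF i).dist_le x).trans_lt hx
    · have h1 := (hF i).dist_le (z j)
      have h2 := (hF i).lip (z j) p (g j)
      have h3 := hri i
      have h4 := hz2 j
      change dist (z j) (o i) < ri i
      linarith
  have hx0 : ∀ j, η / 2 + δ ≤ dist x (z j) := by
    intro j
    have h1 := (hF i).lip' x (z j) (g j)
    have h2 := hcon (g j) (hgB j)
    linarith [hz1 j]
  have hsep : ∀ j k, j ≠ k → η / 2 + δ ≤ dist (w j) (w k) := by
    refine Fin.cases (Fin.cases (fun h => absurd rfl h) fun k _ => hx0 k) fun j =>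
      Fin.cases (fun _ => ?_) fun k hjk => ?_
    · rw [dist_comm]
      exact hx0 j
    · have h1 := hgδ j k (fun h => hjk (congrArg Fin.succ h))
      have h2 := (hF i).le_add (z j) (g j) (g k)
      have h3 := (hF i).lip' (z j) (z k) (g k)
      change η / 2 + δ ≤ dist (z j) (z k)
      linarith [hz1 j, hz1 k]
  refine hmax ⟨fun j => φ i (w j), fun j => hmap i _ (hw j), fun j k hjk => ?_⟩
  have h1 := (abs_lt.1 (hdis i _ (hw j) _ (hw k))).1
  linarith [hsep j k hjk]

end Close

/-! ### The metric on the disjoint union -/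

/-- The component of a point of the disjoint union; `none` is the component `Y`. -/
def component {X : ℕ → Type u} {Y : Type v} : (Σ i, X i) ⊕ Y → Option ℕ
  | Sum.inl a => some a.1
  | Sum.inr _ => none

/-- Case analysis on two points in the same component. -/
lemma component_cases {X : ℕ → Type u} {Y : Type v}
    {C : (Σ i, X i) ⊕ Y → (Σ i, X i) ⊕ Y → Prop}
    (hl : ∀ i (x x' : X i), C (Sum.inl ⟨i, x⟩) (Sum.inl ⟨i, x'⟩))
    (hr : ∀ y y', C (Sum.inr y) (Sum.inr y')) (a b : (Σ i, X i) ⊕ Y)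
    (h : component a = component b) : C a b := by
  rcases a with ⟨i, x⟩ | y <;> rcases b with ⟨j, x'⟩ | y' <;> simp [component] at h
  · subst h
    exact hl i x x'
  · exact hr y y'

section Union

variable {X : ℕ → Type u} {Y : Type v} [∀ i, MetricSpace (X i)] [MetricSpace Y]

/-- The given distance inside each component, with junk value `0` across components. -/
noncomputable def innerDist : (Σ i, X i) ⊕ Y → (Σ i, X i) ⊕ Y → ℝ
  | Sum.inl a, Sum.inl b => if h : a.1 = b.1 then dist (h ▸ a.2) b.2 else 0
  | Sum.inr y, Sum.inr y' => dist y y'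
  | _, _ => 0

/-- The distance from a point of the disjoint union to a point of `Y`. -/
noncomputable def distToLimit (F : ∀ i, X i → Y → ℝ) : (Σ i, X i) ⊕ Y → Y → ℝ
  | Sum.inl a => F a.1 a.2
  | Sum.inr y => dist y

@[simp] lemma innerDist_inl (i : ℕ) (x x' : X i) :
    innerDist (Sum.inl ⟨i, x⟩ : (Σ i, X i) ⊕ Y) (Sum.inl ⟨i, x'⟩) = dist x x' := by
  simp [innerDist]

@[simp] lemma innerDist_inr (y y' : Y) :
    innerDist (Sum.inr y : (Σ i, X i) ⊕ Y) (Sum.inr y') = dist y y' := rfl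

lemma amalgData_union {o : ∀ i, X i} {p : Y} {n ε : ℕ → ℝ} {F : ∀ i, X i → Y → ℝ}
    (hε : ∀ i, 0 < ε i) (hF : ∀ i, GlueFun (o i) p (n i) (ε i) (F i)) :
    AmalgData (component (X := X) (Y := Y)) innerDist (distToLimit F) where
  self := by rintro (⟨i, x⟩ | y) <;> simp
  symm := component_cases (by simp [dist_comm]) (by simp [dist_comm])
  tri a b e hab hbe := by
    rcases a with ⟨i, x⟩ | y <;> rcases b with ⟨j, x'⟩ | y' <;> rcases e with ⟨k, x''⟩ | y'' <;>
      simp [component] at hab hbe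
    · subst hab hbe
      simpa using dist_triangle x x' x''
    · simpa using dist_triangle y y' y''
  eq := component_cases (by simp) (by simp)
  lip := by
    rintro (⟨i, x⟩ | z) y y'
    · exact (hF i).lip x y y'
    · exact dist_triangle z y' y
  le_add := by
    rintro (⟨i, x⟩ | z) y y'
    · exact (hF i).le_add x y y'
    · exact dist_triangle_left y y' z
  lip' a b y h := by
    refine component_cases (C := fun a b => distToLimit F a y ≤ innerDist a b + distToLimit F b y)
      ?_ ?_ a b h
    · intro i x x'
      simpa [distToLimit] using (hF i).lip' x x' y
    · intro z z'
      exact dist_triangle z z' y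
  le_add' a b y h := by
    refine component_cases (C := fun a b => innerDist a b ≤ distToLimit F a y + distToLimit F b y)
      ?_ ?_ a b h
    · intro i x x'
      simpa [distToLimit] using (hF i).le_add' x x' y
    · intro z z'
      exact dist_triangle_right z z' y
  sep := by
    have hnn : ∀ i x y, 0 ≤ F i x y := fun i x y => (hε i).le.trans ((hF i).lower x y)
    rintro (⟨i, x⟩ | z) (⟨j, x'⟩ | z') hne
    · exact ⟨ε i, hε i, fun y => le_add_of_le_of_nonneg ((hF i).lower x y) (hnn j x' y)⟩
    · exact ⟨ε i, hε i, fun y => le_add_of_le_of_nonneg ((hF i).lower x y) dist_nonneg⟩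
    · exact ⟨ε j, hε j, fun y => le_add_of_nonneg_of_le dist_nonneg ((hF j).lower x' y)⟩
    · exact absurd rfl hne

end Union

/-- Properness of a metric space `Z` that is the union of proper pieces `X i` and `Y` of which `Y`
absorbs the bounded parts of `X i` for large `i`. An ultrafilter on a ball either contains a
piece, or has its limit in `Y`. -/
lemma properSpace_of_pieces {X : ℕ → Type u} {Y : Type v} {Z : Type*}
    [∀ i, MetricSpace (X i)] [MetricSpace Y] [MetricSpace Z]
    [∀ i, ProperSpace (X i)] [ProperSpace Y]
    (f : ∀ i, X i → Z) (g : Y → Z) (hf : ∀ i, Isometry (f i)) (hg : Isometry g)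
    (hcover : ∀ a, (∃ i x, f i x = a) ∨ ∃ y, g y = a) (o : ∀ i, X i) (p : Y)
    (habs : ∀ R, ∀ δ > 0, ∀ᶠ i in atTop, ∀ x, dist (f i x) (g p) ≤ R →
      ∃ y, dist (f i x) (g y) < δ) :
    ProperSpace Z := by
  refine ProperSpace.of_isCompact_closedBall_of_le 0 ?_
  suffices H : ∀ R, IsCompact (closedBall (g p) R) by
    intro a R _
    exact (H (R + dist a (g p))).of_isClosed_subset isClosed_closedBall
      (closedBall_subset_closedBall' le_rfl)
  intro R
  have hpiece : ∀ i, IsCompact (range (f i) ∩ closedBall (g p) R) := by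
    intro i
    have hsub : range (f i) ∩ closedBall (g p) R ⊆
        f i '' closedBall (o i) (R + dist (g p) (f i (o i))) := by
      rintro _ ⟨⟨x, rfl⟩, hx⟩
      refine ⟨x, ?_, rfl⟩
      rw [mem_closedBall, ← (hf i).dist_eq]
      exact (dist_triangle _ (g p) _).trans (by gcongr; exact hx)
    exact ((isCompact_closedBall _ _).image (hf i).continuous).of_isClosed_subset
      ((hf i).isClosedEmbedding.isClosed_range.inter isClosed_closedBall) hsub
  rw [isCompact_iff_ultrafilter_le_nhds']
  intro U hU
  by_cases hi : ∃ i, range (f i) ∈ U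
  · obtain ⟨i, hi⟩ := hi
    obtain ⟨a, ha, hle⟩ := isCompact_iff_ultrafilter_le_nhds'.1 (hpiece i) U (inter_mem hi hU)
    exact ⟨a, ha.2, hle⟩
  push Not at hi
  -- Along `U` the points come arbitrarily close to `Y`.
  have hclose : ∀ δ > 0, ∀ᶠ a in (U : Filter Z), ∃ y, dist a (g y) < δ := by
    intro δ hδ
    obtain ⟨M, hM⟩ := eventually_atTop.1 (habs R δ hδ)
    have hfin : ∀ᶠ a in (U : Filter Z), ∀ i ∈ Finset.range M, a ∉ range (f i) := by
      rw [Finset.eventually_all]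
      intro i _
      exact Ultrafilter.compl_mem_iff_notMem.2 (hi i)
    filter_upwards [hfin, hU] with a ha haR
    rcases hcover a with ⟨i, x, rfl⟩ | ⟨y, rfl⟩
    · refine hM i ?_ x haR
      by_contra hlt
      exact ha i (Finset.mem_range.2 (not_le.1 hlt)) ⟨x, rfl⟩
    · exact ⟨y, by simpa using hδ⟩
  have hmin : ∀ a, ∃ y, ∀ y', dist a (g y) ≤ dist a (g y') := by
    intro a
    have : Nonempty Y := ⟨p⟩
    refine Continuous.exists_forall_le (continuous_const.dist hg.continuous) ?_
    refine tendsto_atTop_mono (f := fun y => dist y p - dist a (g p)) (fun y => ?_)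
      (tendsto_atTop_add_const_right _ _ (tendsto_dist_right_cocompact_atTop p))
    rw [← hg.dist_eq y p, sub_le_iff_le_add]
    exact dist_triangle_left _ _ _
  choose π hπ using hmin
  have hlim : Tendsto (fun a => dist a (g (π a))) U (𝓝 0) := by
    refine Metric.tendsto_nhds.2 fun δ hδ => ?_
    filter_upwards [hclose δ hδ] with a ⟨y, hy⟩
    rw [Real.dist_0_eq_abs, abs_of_nonneg dist_nonneg]
    exact (hπ a y).trans_lt hy
  have hbdd : closedBall p (2 * R) ∈ U.map π := by
    rw [Ultrafilter.mem_map]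
    filter_upwards [hU] with a ha
    rw [mem_preimage, mem_closedBall, ← hg.dist_eq]
    have h1 := hπ a p
    have h2 := dist_triangle_left (g (π a)) (g p) a
    rw [mem_closedBall] at ha
    linarith
  obtain ⟨y, -, hy⟩ := isCompact_iff_ultrafilter_le_nhds'.1 (isCompact_closedBall p (2 * R)) _ hbdd
  have hy' : Tendsto (fun a => dist (g (π a)) (g y)) U (𝓝 0) := by
    simp only [hg.dist_eq]
    exact tendsto_iff_dist_tendsto_zero.1 (show Tendsto π U (𝓝 y) from hy)
  have hU' : Tendsto id (U : Filter Z) (𝓝 (g y)) := by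
    refine tendsto_iff_dist_tendsto_zero.2 ?_
    refine squeeze_zero (fun _ => dist_nonneg) (fun a => dist_triangle a (g (π a)) (g y)) ?_
    simpa using hlim.add hy'
  exact ⟨g y, isClosed_closedBall.mem_of_tendsto hU' hU, hU'⟩

/-- If `(X i, o i) → (Y, p)` in the pointed Gromov-Hausdorff sense (all spaces proper),
then the disjoint union carries a proper metric extending those of the pieces, for which
`X i → Y` in the compact Hausdorff sense and `o i → p`. -/
theorem stmt_2 (X : ℕ → Type u) (Y : Type v)
    [∀ i, MetricSpace (X i)] [MetricSpace Y]
    [∀ i, ProperSpace (X i)] [ProperSpace Y]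
    (o : ∀ i, X i) (p : Y)
    (h : PointedGHConv X Y o p) :
    ∃ m : MetricSpace ((Σ i, X i) ⊕ Y), GoodGlueMetric X Y o p m := by
  obtain ⟨n, F, hn, hF⟩ := exists_glueFun_seq h
  have hε : ∀ i, (0 : ℝ) < 1 / ((n i : ℝ) + 1) := fun i => by positivity
  have : Nonempty Y := ⟨p⟩
  have D := amalgData_union hε hF
  let m : MetricSpace ((Σ i, X i) ⊕ Y) := D.metricSpace
  have hl : ∀ (i : ℕ) (x x' : X i),
      dist (Sum.inl ⟨i, x⟩ : (Σ i, X i) ⊕ Y) (Sum.inl ⟨i, x'⟩) = dist x x' := by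
    intro i x x'
    exact (if_pos rfl).trans (innerDist_inl i x x')
  have hr : ∀ y y' : Y, dist (Sum.inr y : (Σ i, X i) ⊕ Y) (Sum.inr y') = dist y y' :=
    fun y y' => if_pos rfl
  have hlr : ∀ (i : ℕ) (x : X i) (y : Y),
      dist (Sum.inl ⟨i, x⟩ : (Σ i, X i) ⊕ Y) (Sum.inr y) = F i x y := by
    intro i x y
    refine (if_neg (by simp [component])).trans (le_antisymm ?_ ?_)
    · refine (D.ciInf_le _ _ y).trans ?_
      simp [distToLimit]
    · exact le_ciInf fun y' => (hF i).lip x y y' |>.trans_eq (by simp [distToLimit, dist_comm])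
  refine ⟨m, hl, hr, ?_, ⟨Sum.inr p, fun r hr0 => ?_⟩, ?_⟩
  · refine properSpace_of_pieces (fun i x => Sum.inl ⟨i, x⟩) Sum.inr
      (fun i => Isometry.of_dist_eq (hl i)) (Isometry.of_dist_eq hr) ?_ o p ?_
    · rintro (⟨i, x⟩ | y)
      · exact Or.inl ⟨i, x, rfl⟩
      · exact Or.inr ⟨y, rfl⟩
    · intro R δ hδ
      simp only [hlr]
      exact eventually_exists_right hn hF R hδ
  · obtain ⟨ri, εi, φ, hri, hrilim, -, hεi, -, hmap, hdis, -⟩ := h r hr0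
    refine ⟨ri, hri, hrilim, Metric.tendsto_nhds.2 fun η hη => ?_⟩
    filter_upwards [eventually_ball_close_left hn hF r (half_pos hη),
      eventually_ball_close_right hn hF hri hεi hmap hdis (half_pos hη)] with i h1 h2
    rw [Real.dist_0_eq_abs, abs_of_nonneg hausdorffDist_nonneg]
    refine (hausdorffDist_le_of_mem_dist (half_pos hη).le ?_ ?_).trans_lt (half_lt_self hη)
    · rintro _ ⟨⟨x, rfl⟩, hx⟩
      rw [mem_ball, hlr] at hx
      obtain ⟨y, hy, hxy⟩ := h2 x hx
      exact ⟨Sum.inr y, ⟨⟨y, rfl⟩, by rwa [mem_ball, hr]⟩, by rwa [hlr]⟩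
    · rintro _ ⟨⟨y, rfl⟩, hy⟩
      rw [mem_ball, hr] at hy
      obtain ⟨x, hx, hxy⟩ := h1 y hy
      refine ⟨Sum.inl ⟨i, x⟩, ⟨⟨x, rfl⟩, ?_⟩, ?_⟩
      · rw [mem_ball, hlr]
        exact hx.trans_le (hri i)
      · rwa [dist_comm, hlr]
  · simp only [hlr]
    refine squeeze_zero (fun i => (hε i).le.trans ((hF i).lower _ _)) (fun i => (hF i).base) ?_
    exact tendsto_one_div_add_atTop_nhds_zero_nat.comp hn
end

section
/- Assume a sequence of metric spaces (X_i)_{i∈ℕ} and a metric space X have an asymptotic relation, and that X is separable. Then there exist Borel measurable maps f_i : X → X_i (i ∈ ℕ) such that: (i) for all x, y ∈ X, d_{X_i}(f_i(x), f_i(y)) → d_X(x, y); (ii) for every x ∈ X, f_i(x) → x in 𝒳; and (iii) for every sequence x_i ∈ X converging in X to a point x ∈ X, f_i(x_i) → x in 𝒳. -/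
/-!
Fix a dense sequence `d` in `Y` and, for every `n`, a sequence `p n i ∈ X i` converging to `d n`.
Since `dist (p j i) (p k i) → dist (d j) (d k)` for all `j, k`, a diagonal argument
(`exists_diagonal`) yields `N i → ∞` such that, for all large `i` and all `j, k ≤ N i`,
`dist (p j i) (p k i)` exceeds `dist (d j) (d k)` by less than `1 / (N i + 1)`. Define
`f i y := p k i`, where `k` is the index of a point of `d 0, …, d (N i)` nearest to `y`; this is
Borel measurable because the nearest-point index is a simple function of `y`.

If `y i → a`, with nearest indices `k i`, then `d (k i) → a`. For a sequence `c i ∈ X i` converging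
to `a` and a fixed `m`, the distance from `c i` to `f i (y i)` is eventually at most
`dist (c i) (p m i) + dist (d m) (d (k i)) + 1 / (N i + 1)`, which tends to `2 * dist (d m) a`; by
density this is arbitrarily small, so `f i (y i) → a` by `close_conv`. Constant sequences give
`f i y → y`, and `dist_conv` then gives the convergence of distances.
-/

open Filter Topology Metric Set ENNReal

universe u v

/-- Convergence of a sequence `x i ∈ X i` to `y ∈ Y` in the glued space. -/
def ConvTo (X : ℕ → Type u) (Y : Type v)
    (T : TopologicalSpace ((Σ i, X i) ⊕ Y)) (x : ∀ i, X i) (y : Y) : Prop :=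
  Tendsto (fun i => (Sum.inl ⟨i, x i⟩ : (Σ i, X i) ⊕ Y)) atTop
    (@nhds _ T (Sum.inr y))

/-- Convergence of a subsequence. -/
def SubConvTo (X : ℕ → Type u) (Y : Type v)
    (T : TopologicalSpace ((Σ i, X i) ⊕ Y)) (φ : ℕ → ℕ)
    (x : ∀ k, X (φ k)) (y : Y) : Prop :=
  Tendsto (fun k => (Sum.inl ⟨φ k, x k⟩ : (Σ i, X i) ⊕ Y)) atTop
    (@nhds _ T (Sum.inr y))

/-- An asymptotic relation between the sequence of metric spaces `X i` and the
metric space `Y`: a topology on the disjoint union satisfying (A1)-(A4). -/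
structure AsymptoticRelation (X : ℕ → Type u) (Y : Type v)
    [∀ i, MetricSpace (X i)] [MetricSpace Y]
    (T : TopologicalSpace ((Σ i, X i) ⊕ Y)) : Prop where
  closed_piece : ∀ i, @IsClosed _ T
    (Set.range fun x : X i => (Sum.inl ⟨i, x⟩ : (Σ i, X i) ⊕ Y))
  closed_limit : @IsClosed _ T (Set.range (Sum.inr : Y → (Σ i, X i) ⊕ Y))
  induced_piece : ∀ i, TopologicalSpace.induced
      (fun x : X i => (Sum.inl ⟨i, x⟩ : (Σ i, X i) ⊕ Y)) T
      = (inferInstance : TopologicalSpace (X i))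
  induced_limit : TopologicalSpace.induced (Sum.inr : Y → (Σ i, X i) ⊕ Y) T
      = (inferInstance : TopologicalSpace Y)
  exists_approx : ∀ y : Y, ∃ x : ∀ i, X i, ConvTo X Y T x y
  dist_conv : ∀ (x y : ∀ i, X i) (a b : Y), ConvTo X Y T x a → ConvTo X Y T y b →
      Tendsto (fun i => dist (x i) (y i)) atTop (nhds (dist a b))
  close_conv : ∀ (x y : ∀ i, X i) (a : Y), ConvTo X Y T x a →
      Tendsto (fun i => dist (x i) (y i)) atTop (nhds 0) → ConvTo X Y T y a

/-- A sequence `x i ∈ X i` is bounded. -/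
def BoundedSeq (X : ℕ → Type u) (Y : Type v)
    [∀ i, MetricSpace (X i)] [MetricSpace Y]
    (T : TopologicalSpace ((Σ i, X i) ⊕ Y)) (x : ∀ i, X i) : Prop :=
  ∃ (o : ∀ i, X i) (p : Y), ConvTo X Y T o p ∧ ∃ C : ℝ, ∀ i, dist (x i) (o i) ≤ C

/-- The asymptotic relation is asymptotically compact. -/
def AsympCompactRel (X : ℕ → Type u) (Y : Type v)
    [∀ i, MetricSpace (X i)] [MetricSpace Y]
    (T : TopologicalSpace ((Σ i, X i) ⊕ Y)) : Prop :=
  ∀ x : ∀ i, X i, BoundedSeq X Y T x →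
    ∃ φ : ℕ → ℕ, StrictMono φ ∧ ∃ y : Y, SubConvTo X Y T φ (fun k => x (φ k)) y

/-- Γ-convergence of functionals `E i : X i → [0,∞]` to `F : Y → [0,∞]`. -/
def GammaConv (X : ℕ → Type u) (Y : Type v)
    [∀ i, MetricSpace (X i)] [MetricSpace Y]
    (T : TopologicalSpace ((Σ i, X i) ⊕ Y))
    (E : ∀ i, X i → ℝ≥0∞) (F : Y → ℝ≥0∞) : Prop :=
  (∀ y : Y, ∃ x : ∀ i, X i, ConvTo X Y T x y ∧
      Tendsto (fun i => E i (x i)) atTop (nhds (F y))) ∧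
  (∀ (x : ∀ i, X i) (y : Y), ConvTo X Y T x y →
      F y ≤ atTop.liminf fun i => E i (x i))

/-- Asymptotic compactness of a family of functionals. -/
def AsympCompactFam (X : ℕ → Type u) (Y : Type v)
    [∀ i, MetricSpace (X i)] [MetricSpace Y]
    (T : TopologicalSpace ((Σ i, X i) ⊕ Y))
    (E : ∀ i, X i → ℝ≥0∞) : Prop :=
  ∀ x : ∀ i, X i, BoundedSeq X Y T x →
    (atTop.limsup fun i => E i (x i)) < ⊤ →
    ∃ φ : ℕ → ℕ, StrictMono φ ∧ ∃ y : Y, SubConvTo X Y T φ (fun k => x (φ k)) y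

/-- Compact convergence of functionals. -/
def CompactConv (X : ℕ → Type u) (Y : Type v)
    [∀ i, MetricSpace (X i)] [MetricSpace Y]
    (T : TopologicalSpace ((Σ i, X i) ⊕ Y))
    (E : ∀ i, X i → ℝ≥0∞) (F : Y → ℝ≥0∞) : Prop :=
  GammaConv X Y T E F ∧ AsympCompactFam X Y T E

/-- Diagonal argument: properties `P n`, each of which holds eventually, hold eventually along some
index `n = N i` tending to infinity. -/
theorem exists_diagonal (P : ℕ → ℕ → Prop) (hP : ∀ n, ∀ᶠ i in atTop, P n i) :
    ∃ N : ℕ → ℕ, Tendsto N atTop atTop ∧ ∀ᶠ i in atTop, P (N i) i := by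
  classical
  refine ⟨fun i => Nat.findGreatest (fun n => P n i) i, ?_, ?_⟩
  · refine tendsto_atTop.2 fun m => ?_
    filter_upwards [hP m, eventually_ge_atTop m] with i hi hm
    exact Nat.le_findGreatest hm hi
  · filter_upwards [hP 0] with i hi
    exact Nat.findGreatest_spec (P := fun n => P n i) (Nat.zero_le i) hi

/-- Existence of an asymptotically continuous Borel measurable metric approximation
compatible with a given asymptotic relation, when `Y` is separable. -/
theorem stmt_3 (X : ℕ → Type u) (Y : Type v)
    [∀ i, MetricSpace (X i)] [MetricSpace Y]
    [TopologicalSpace.SeparableSpace Y]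
    [MeasurableSpace Y] [BorelSpace Y]
    [∀ i, MeasurableSpace (X i)] [∀ i, BorelSpace (X i)]
    (T : TopologicalSpace ((Σ i, X i) ⊕ Y))
    (hT : AsymptoticRelation X Y T) :
    ∃ f : ∀ i, Y → X i,
      (∀ i, Measurable (f i)) ∧
      (∀ x y : Y, Tendsto (fun i => dist (f i x) (f i y)) atTop (nhds (dist x y))) ∧
      (∀ x : Y, ConvTo X Y T (fun i => f i x) x) ∧
      (∀ (x : ℕ → Y) (a : Y), Tendsto x atTop (nhds a) →
        ConvTo X Y T (fun i => f i (x i)) a) := by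
  rcases isEmpty_or_nonempty Y with hY | hY
  · exact ⟨fun i y => isEmptyElim y, fun i => measurable_of_empty _, fun x => isEmptyElim x,
      fun x => isEmptyElim x, fun _ a => isEmptyElim a⟩
  let d : ℕ → Y := TopologicalSpace.denseSeq Y
  have hd : DenseRange d := TopologicalSpace.denseRange_denseSeq Y
  choose p hp using fun n => hT.exists_approx (d n)
  obtain ⟨N, hN, hNP⟩ := exists_diagonal
    (fun n i => ∀ j ∈ Set.Iic n, ∀ k ∈ Set.Iic n,
      dist (p j i) (p k i) < dist (d j) (d k) + 1 / ((n : ℝ) + 1)) (by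
      intro n
      refine (eventually_all_finite (finite_Iic n)).2 fun j _ =>
        (eventually_all_finite (finite_Iic n)).2 fun k _ => ?_
      refine (hT.dist_conv _ _ _ _ (hp j) (hp k)).eventually_lt_const ?_
      have : (0 : ℝ) < 1 / ((n : ℝ) + 1) := by positivity
      linarith)
  let ind : ∀ i, MeasureTheory.SimpleFunc Y ℕ :=
    fun i => MeasureTheory.SimpleFunc.nearestPtInd d (N i)
  have ind_le : ∀ i y, ind i y ≤ N i :=
    fun i y => MeasureTheory.SimpleFunc.nearestPtInd_le d (N i) y
  have dist_ind : ∀ i y m, m ≤ N i → dist (d (ind i y)) y ≤ dist (d m) y := by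
    intro i y m hm
    have h := MeasureTheory.SimpleFunc.edist_nearestPt_le d y hm
    rw [edist_dist, edist_dist] at h
    exact (ENNReal.ofReal_le_ofReal_iff dist_nonneg).1 h
  have key : ∀ (x : ℕ → Y) (a : Y), Tendsto x atTop (nhds a) →
      ConvTo X Y T (fun i => p (ind i (x i)) i) a := by
    intro x a hx
    obtain ⟨c, hc⟩ := hT.exists_approx a
    refine hT.close_conv c _ a hc ?_
    rw [Metric.tendsto_nhds]
    intro ε hε
    obtain ⟨m, hm⟩ := hd.exists_dist_lt a (show 0 < ε / 8 by positivity)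
    have hinv : Tendsto (fun i => 1 / ((N i : ℝ) + 1)) atTop (nhds 0) :=
      tendsto_one_div_add_atTop_nhds_zero_nat.comp hN
    filter_upwards [hNP, hN.eventually_ge_atTop m,
      (hT.dist_conv _ _ _ _ hc (hp m)).eventually_lt_const hm,
      hinv.eventually_lt_const (show 0 < ε / 8 by positivity),
      Metric.tendsto_nhds.1 hx (ε / 8) (by positivity)] with i h1 h2 h3 h4 h5
    have h6 := h1 m h2 (ind i (x i)) (ind_le i (x i))
    have h7 := dist_ind i (x i) m h2
    have h8 := dist_triangle (c i) (p m i) (p (ind i (x i)) i)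
    have h9 := dist_triangle (d m) (x i) (d (ind i (x i)))
    have h10 := dist_triangle (d m) a (x i)
    rw [dist_comm (x i) (d _)] at h9
    rw [dist_comm (d m) a, dist_comm a (x i)] at h10
    rw [Real.dist_0_eq_abs, abs_of_nonneg dist_nonneg]
    linarith
  refine ⟨fun i y => p (ind i y) i, fun i => ((ind i).map fun k => p k i).measurable,
    fun x y => ?_, fun x => key _ x tendsto_const_nhds, key⟩
  exact hT.dist_conv _ _ x y (key _ x tendsto_const_nhds) (key _ y tendsto_const_nhds)
end

section
/- Assume a sequence of metric spaces (X_i)_{i∈ℕ} and a metric space X have an asymptotic relation, and let f_i : X → X_i be maps that are compatible with it (f_i(x) → x in 𝒳 for every x ∈ X) and asymptotically continuous (for every sequence x_i → x in X, f_i(x_i) → x in 𝒳). Then for every compact subset C ⊆ X, sup_{x,y ∈ C} |d_{X_i}(f_i(x), f_i(y)) − d_X(x, y)| → 0 as i → ∞. -/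
/-!
If the distortion did not tend to zero uniformly on `C`, there would be infinitely many indices `i`
with pairs `x i, y i ∈ C` of distortion at least `ε`. By compactness of `C ×ˢ C`, along a strictly
increasing sequence `ψ` of such indices the pairs converge to some `(a, b)`. Asymptotic continuity
and (A3) speak about full sequences only, so the sequences are filled up with the constant values
`a` and `b` at the remaining indices (`tendsto_fill`). Then both `dist (f i (x i)) (f i (y i))` and
`dist (x i) (y i)` tend to `dist a b`, which contradicts the lower bound at the indices `ψ k`.
-/

open Filter Topology Metric Set ENNReal

universe u v

open Classical in
/-- A subsequence converging to `a`, filled up with the constant value `a` at the other indices,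
is a full sequence converging to `a`. -/
lemma tendsto_fill {Y : Type v} [TopologicalSpace Y] {ψ : ℕ → ℕ} (hψ : StrictMono ψ)
    {x : ℕ → Y} {a : Y} (h : Tendsto (fun k => x (ψ k)) atTop (𝓝 a)) :
    Tendsto (fun i => if i ∈ range ψ then x i else a) atTop (𝓝 a) := by
  intro U hU
  obtain ⟨K, hK⟩ := mem_atTop_sets.1 (h hU)
  refine mem_atTop_sets.2 ⟨ψ K, fun i hi => ?_⟩
  show (if i ∈ range ψ then x i else a) ∈ U
  split_ifs with hr
  · obtain ⟨k, rfl⟩ := hr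
    exact hK k (hψ.le_iff_le.1 hi)
  · exact mem_of_mem_nhds hU

/-- An asymptotically continuous compatible metric approximation has distortion
tending to zero on every compact subset of `Y`. -/
theorem stmt_4 (X : ℕ → Type u) (Y : Type v)
    [∀ i, MetricSpace (X i)] [MetricSpace Y]
    (T : TopologicalSpace ((Σ i, X i) ⊕ Y))
    (hT : AsymptoticRelation X Y T)
    (f : ∀ i, Y → X i)
    (hcompat : ∀ x : Y, ConvTo X Y T (fun i => f i x) x)
    (hac : ∀ (x : ℕ → Y) (a : Y), Tendsto x atTop (nhds a) →
      ConvTo X Y T (fun i => f i (x i)) a) :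
    ∀ C : Set Y, IsCompact C → ∀ ε > (0:ℝ), ∃ N : ℕ, ∀ i ≥ N,
      ∀ x ∈ C, ∀ y ∈ C, |dist (f i x) (f i y) - dist x y| < ε := by
  classical
  intro C hC ε hε
  by_contra! hbad
  have hfreq : ∃ᶠ i in atTop, ∃ p : Y × Y, p ∈ C ×ˢ C ∧
      ε ≤ |dist (f i p.1) (f i p.2) - dist p.1 p.2| := by
    refine frequently_atTop.2 fun N => ?_
    obtain ⟨i, hi, x, hx, y, hy, h⟩ := hbad N
    exact ⟨i, hi, (x, y), ⟨hx, hy⟩, h⟩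
  obtain ⟨φ, hφ, hp⟩ := extraction_of_frequently_atTop hfreq
  choose p hpC hpε using hp
  obtain ⟨⟨a, b⟩, -, θ, hθ, hlim⟩ := (hC.prod hC).tendsto_subseq hpC
  have hψ : StrictMono (φ ∘ θ) := hφ.comp hθ
  -- Re-index the bad pairs by the index of the space in which they are bad.
  obtain ⟨q, hq⟩ : ∃ q : ℕ → Y × Y, ∀ k, q (φ k) = p k :=
    ⟨fun i => p (Function.invFun φ i), fun k =>
      congrArg p (Function.leftInverse_invFun hφ.injective k)⟩
  have ha : Tendsto (fun k => (q ((φ ∘ θ) k)).1) atTop (𝓝 a) := by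
    simpa [hq, Function.comp_def] using (continuous_fst.tendsto _).comp hlim
  have hb : Tendsto (fun k => (q ((φ ∘ θ) k)).2) atTop (𝓝 b) := by
    simpa [hq, Function.comp_def] using (continuous_snd.tendsto _).comp hlim
  have hx := tendsto_fill (x := fun i => (q i).1) hψ ha
  have hy := tendsto_fill (x := fun i => (q i).2) hψ hb
  have hdist := (hT.dist_conv _ _ a b (hac _ a hx) (hac _ b hy)).sub (hx.dist hy)
  have habs := (hdist.abs).comp hψ.tendsto_atTop
  rw [sub_self, abs_zero] at habs
  obtain ⟨k, hk⟩ := (habs.eventually_lt_const hε).exists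
  have hmem : φ (θ k) ∈ range (φ ∘ θ) := ⟨k, rfl⟩
  simp only [Function.comp_apply, if_pos hmem, hq] at hk
  exact absurd hk (not_lt.2 (hpε (θ k)))
end

section
/- Assume a sequence of metric spaces (X_i)_{i∈ℕ} and a metric space X have an asymptotic relation, and that all X_i and X are separable. Then for any functions E_i : X_i → [0,+∞] there exist a strictly increasing map φ : ℕ → ℕ and a function E : X → [0,+∞] such that the subsequence (E_{φ(k)})_k Γ-converges to E, i.e.: for every x ∈ X there is a sequence x_k ∈ X_{φ(k)} with x_k → x in 𝒳 and E_{φ(k)}(x_k) → E(x); and for every sequence x_k ∈ X_{φ(k)} converging in 𝒳 to x ∈ X one has E(x) ≤ liminf_k E_{φ(k)}(x_k). -/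
/-!
Let `d n` be a dense sequence in `Y` and `z n i ∈ X i` sequences converging to `d n`. The ball of
rational radius `r` around `z n i` transports `B(d n, r)` to `X i`. The infima of `E i` over
these countably many balls form a sequence in a compact metrizable product, hence converge along one
common subsequence `φ`, to numbers `M (n, r)`. The Γ-limit is `F y = ⨆ M (n, r)`, over the
balls `B(d n, r)` containing `y`.

A sequence converging to `y` eventually enters each transported ball around `y`, which gives the
liminf inequality. Conversely, small balls contain points with energy at most about `F y`; choosing
`x k` as an almost minimizer of `edist x (w k) + (E x - F y)`, with `w` any sequence converging to
`y`, gives a recovery sequence. The axioms `dist_conv` and `close_conv` pass to subsequences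
because a sequence given along a subsequence can be completed by an approximating sequence of its
limit (`exists_completion`).
-/

open Filter Topology Metric Set ENNReal

universe u v

/-- Completion of a sequence given on a subsequence of indices by a prescribed full sequence. -/
theorem exists_completion {X : ℕ → Type u} {φ : ℕ → ℕ} (hφ : StrictMono φ)
    (x : ∀ k, X (φ k)) (w : ∀ i, X i) :
    ∃ x' : ∀ i, X i, (∀ k, x' (φ k) = x k) ∧ ∀ i, (∀ k, φ k ≠ i) → x' i = w i := by
  have key : ∀ i, ∃ a : X i, (∀ k, φ k = i →
      (⟨i, a⟩ : Σ i, X i) = ⟨φ k, x k⟩) ∧ ((∀ k, φ k ≠ i) → a = w i) := by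
    intro i
    by_cases h : ∃ k, φ k = i
    · obtain ⟨k, rfl⟩ := h
      refine ⟨x k, fun l hl => ?_, fun h => absurd rfl (h k)⟩
      rw [hφ.injective hl]
    · push Not at h
      exact ⟨w i, fun k hk => absurd hk (h k), fun _ => rfl⟩
  choose x' h1 h2 using key
  exact ⟨x', fun k => by simpa using h1 (φ k) k rfl, h2⟩

/-- A sequence converging along a subsequence is the restriction of a full convergent sequence: the
missing indices are filled by an approximating sequence of the limit. -/
theorem SubConvTo.exists_extension {X : ℕ → Type u} {Y : Type v}
    {T : TopologicalSpace ((Σ i, X i) ⊕ Y)} {φ : ℕ → ℕ} (hφ : StrictMono φ)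
    {x : ∀ k, X (φ k)} {y : Y} (hx : SubConvTo X Y T φ x y)
    {w : ∀ i, X i} (hw : ConvTo X Y T w y) :
    ∃ x' : ∀ i, X i, ConvTo X Y T x' y ∧ ∀ k, x' (φ k) = x k := by
  obtain ⟨x', ex, h2⟩ := exists_completion hφ x w
  refine ⟨x', ?_, ex⟩
  intro U hU
  have hxU := hx hU
  have hwU := hw hU
  rw [mem_map, mem_atTop_sets] at hxU hwU ⊢
  obtain ⟨K, hK⟩ := hxU
  obtain ⟨N, hN⟩ := hwU
  refine ⟨max (φ K) N, fun i hi => ?_⟩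
  by_cases h : ∃ k, φ k = i
  · obtain ⟨k, rfl⟩ := h
    have hKk : K ≤ k := hφ.le_iff_le.1 ((le_max_left _ _).trans hi)
    have := hK k hKk
    simp only [mem_preimage] at this ⊢
    rw [ex k]
    exact this
  · push Not at h
    have := hN i ((le_max_right _ _).trans hi)
    simp only [mem_preimage] at this ⊢
    rw [h2 i h]
    exact this

theorem ConvTo.subseq {X : ℕ → Type u} {Y : Type v}
    {T : TopologicalSpace ((Σ i, X i) ⊕ Y)} {φ : ℕ → ℕ} (hφ : StrictMono φ)
    {x : ∀ i, X i} {y : Y} (hx : ConvTo X Y T x y) :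
    SubConvTo X Y T φ (fun k => x (φ k)) y := by
  unfold ConvTo at hx
  exact hx.comp hφ.tendsto_atTop

/-- Axiom `dist_conv` along a subsequence. -/
theorem AsymptoticRelation.sub_dist_conv {X : ℕ → Type u} {Y : Type v}
    [∀ i, MetricSpace (X i)] [MetricSpace Y]
    {T : TopologicalSpace ((Σ i, X i) ⊕ Y)} (hT : AsymptoticRelation X Y T)
    {φ : ℕ → ℕ} (hφ : StrictMono φ) {x y : ∀ k, X (φ k)} {a b : Y}
    (hx : SubConvTo X Y T φ x a) (hy : SubConvTo X Y T φ y b) :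
    Tendsto (fun k => dist (x k) (y k)) atTop (nhds (dist a b)) := by
  obtain ⟨u, hu⟩ := hT.exists_approx a
  obtain ⟨v, hv⟩ := hT.exists_approx b
  obtain ⟨x', hx', ex⟩ := hx.exists_extension hφ hu
  obtain ⟨y', hy', ey⟩ := hy.exists_extension hφ hv
  have := (hT.dist_conv x' y' a b hx' hy').comp hφ.tendsto_atTop
  simpa only [Function.comp_def, ex, ey] using this

/-- Axiom `close_conv` along a subsequence. -/
theorem AsymptoticRelation.sub_close_conv {X : ℕ → Type u} {Y : Type v}
    [∀ i, MetricSpace (X i)] [MetricSpace Y]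
    {T : TopologicalSpace ((Σ i, X i) ⊕ Y)} (hT : AsymptoticRelation X Y T)
    {φ : ℕ → ℕ} (hφ : StrictMono φ) {x : ∀ k, X (φ k)} {w : ∀ i, X i} {a : Y}
    (hw : ConvTo X Y T w a)
    (h : Tendsto (fun k => dist (w (φ k)) (x k)) atTop (nhds 0)) :
    SubConvTo X Y T φ x a := by
  obtain ⟨x', ex, h2⟩ := exists_completion hφ x w
  have hc : ConvTo X Y T x' a := by
    refine hT.close_conv w x' a hw ?_
    rw [Metric.tendsto_atTop] at h ⊢
    intro ε hε
    obtain ⟨K, hK⟩ := h ε hε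
    refine ⟨φ K, fun i hi => ?_⟩
    by_cases h : ∃ k, φ k = i
    · obtain ⟨k, rfl⟩ := h
      rw [ex]
      exact hK k (hφ.le_iff_le.1 hi)
    · push Not at h
      simpa [h2 i h] using hε
  simpa only [ex] using hc.subseq hφ

/-- Γ-compactness: every sequence of functionals has a Γ-convergent subsequence,
provided all the spaces are separable. -/
theorem stmt_8 (X : ℕ → Type u) (Y : Type v)
    [∀ i, MetricSpace (X i)] [MetricSpace Y]
    [∀ i, TopologicalSpace.SeparableSpace (X i)]
    [TopologicalSpace.SeparableSpace Y]
    (T : TopologicalSpace ((Σ i, X i) ⊕ Y))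
    (hT : AsymptoticRelation X Y T)
    (E : ∀ i, X i → ℝ≥0∞) :
    ∃ φ : ℕ → ℕ, StrictMono φ ∧ ∃ F : Y → ℝ≥0∞,
      (∀ y : Y, ∃ x : ∀ k, X (φ k), SubConvTo X Y T φ x y ∧
        Tendsto (fun k => E (φ k) (x k)) atTop (nhds (F y))) ∧
      (∀ (x : ∀ k, X (φ k)) (y : Y), SubConvTo X Y T φ x y →
        F y ≤ atTop.liminf fun k => E (φ k) (x k)) := by
  rcases isEmpty_or_nonempty Y with hY | hY
  · exact ⟨id, strictMono_id, fun _ => 0, fun y => isEmptyElim y, fun _ y => isEmptyElim y⟩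
  let d := TopologicalSpace.denseSeq Y
  have hd : DenseRange d := TopologicalSpace.denseRange_denseSeq Y
  choose z hz using fun n => hT.exists_approx (d n)
  -- `m i (n, r)` is the infimum of `E i` over the ball of radius `r` around `z n i`.
  let m : ℕ → (ℕ × ℚ → ℝ≥0∞) := fun i p => ⨅ x ∈ ball (z p.1 i) (p.2 : ℝ), E i x
  obtain ⟨M, φ, hφ, hM⟩ := CompactSpace.tendsto_subseq m
  rw [tendsto_pi_nhds] at hM
  -- The supremum only involves positive radii, since `dist y (d n) < r`.
  let F : Y → ℝ≥0∞ := fun y => ⨆ p : ℕ × ℚ, ⨆ _ : dist y (d p.1) < p.2, M p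
  have hliminf : ∀ (x : ∀ k, X (φ k)) (y : Y), SubConvTo X Y T φ x y →
      F y ≤ atTop.liminf fun k => E (φ k) (x k) := by
    intro x y hx
    refine iSup₂_le fun p hp => ?_
    rw [← (hM p).liminf_eq]
    refine liminf_le_liminf ?_
    have := hT.sub_dist_conv hφ hx ((hz p.1).subseq hφ)
    filter_upwards [this.eventually_lt_const hp] with k hk
    exact iInf₂_le (x k) (by simpa using hk)
  refine ⟨φ, hφ, F, fun y => ?_, hliminf⟩
  obtain ⟨w, hw⟩ := hT.exists_approx y
  -- Truncated subtraction makes the second term vanish where `E ≤ F y`, in particular if `F y = ⊤`.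
  let g : ∀ k, X (φ k) → ℝ≥0∞ := fun k x => edist (w (φ k)) x + (E (φ k) x - F y)
  have hsmall : ∀ ε : ℝ≥0∞, 0 < ε → ∀ᶠ k in atTop, ⨅ x, g k x < ε := by
    intro ε hε
    rcases eq_or_ne (F y) ⊤ with hF | hF
    · refine Eventually.of_forall fun k => (iInf_le _ (w (φ k))).trans_lt ?_
      simpa [g, hF] using hε
    obtain ⟨q, hq0, hqε⟩ : ∃ q : ℚ, 0 < q ∧ ENNReal.ofReal (q + q) + ENNReal.ofReal q < ε := by
      obtain ⟨δ, hδ0, hδ⟩ := ENNReal.lt_iff_exists_nnreal_btwn.1 hε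
      have hδ0' : (0 : ℝ) < δ := by exact_mod_cast hδ0
      obtain ⟨q, hq0, hq⟩ := exists_rat_btwn (show (0 : ℝ) < δ / 3 by positivity)
      refine ⟨q, by exact_mod_cast hq0, lt_of_le_of_lt ?_ hδ⟩
      rw [← ENNReal.ofReal_add (by positivity) hq0.le, ← ENNReal.ofReal_coe_nnreal]
      exact ENNReal.ofReal_le_ofReal (by linarith)
    have hq0' : (0 : ℝ) < q := by exact_mod_cast hq0
    obtain ⟨n, hn⟩ := hd.exists_dist_lt y hq0'
    have hMF : M (n, q) ≤ F y := le_iSup₂_of_le (n, q) hn le_rfl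
    have hlt : M (n, q) < F y + ENNReal.ofReal q :=
      hMF.trans_lt (ENNReal.lt_add_right hF (by simpa using hq0))
    have hdist := hT.sub_dist_conv hφ (hw.subseq hφ) ((hz n).subseq hφ)
    filter_upwards [(hM (n, q)).eventually_lt_const hlt,
      hdist.eventually_lt_const hn] with k hk hk'
    simp only [Function.comp_apply, m, iInf_lt_iff] at hk
    obtain ⟨x, hxb, hx⟩ := hk
    refine (iInf_le _ x).trans_lt (lt_of_le_of_lt ?_ hqε)
    refine add_le_add ?_ ?_
    · rw [edist_dist]
      refine ENNReal.ofReal_le_ofReal ?_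
      rw [mem_ball'] at hxb
      exact (dist_triangle _ (z n (φ k)) _).trans (add_le_add hk'.le hxb.le)
    · rw [tsub_le_iff_left]
      exact hx.le
  have hinf : Tendsto (fun k => ⨅ x, g k x) atTop (nhds 0) :=
    tendsto_order.2 ⟨fun a ha => absurd ha ENNReal.not_lt_zero, fun ε hε => hsmall ε hε⟩
  -- For `k = 0` the error `(k : ℝ≥0∞)⁻¹` is `⊤`, which is harmless.
  have hchoice : ∀ k, ∃ x, g k x ≤ (⨅ x, g k x) + ((k : ℝ≥0∞))⁻¹ := by
    intro k
    rcases eq_or_ne (⨅ x, g k x) ⊤ with h | h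
    · exact ⟨w (φ k), by simp [h]⟩
    · obtain ⟨x, hx⟩ := iInf_lt_iff.1
        (ENNReal.lt_add_right h (ENNReal.inv_ne_zero.2 (ENNReal.natCast_ne_top k)))
      exact ⟨x, hx.le⟩
  choose x hx using hchoice
  have hg : Tendsto (fun k => g k (x k)) atTop (nhds 0) := by
    refine tendsto_of_tendsto_of_tendsto_of_le_of_le tendsto_const_nhds ?_
      (fun _ => zero_le) hx
    simpa using hinf.add ENNReal.tendsto_inv_nat_nhds_zero
  have hed : Tendsto (fun k => edist (w (φ k)) (x k)) atTop (nhds 0) :=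
    tendsto_of_tendsto_of_tendsto_of_le_of_le tendsto_const_nhds hg
      (fun _ => zero_le) (fun _ => le_self_add)
  have hE : Tendsto (fun k => E (φ k) (x k) - F y) atTop (nhds 0) :=
    tendsto_of_tendsto_of_tendsto_of_le_of_le tendsto_const_nhds hg
      (fun _ => zero_le) (fun _ => le_add_self)
  have hconv : SubConvTo X Y T φ x y := by
    refine hT.sub_close_conv hφ hw ?_
    have := (ENNReal.tendsto_toReal ENNReal.zero_ne_top).comp hed
    simpa only [Function.comp_def, dist_edist, ENNReal.toReal_zero] using this
  refine ⟨x, hconv, tendsto_of_le_liminf_of_limsup_le (hliminf x y hconv) ?_⟩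
  have hadd : Tendsto (fun k => F y + (E (φ k) (x k) - F y)) atTop (nhds (F y)) := by
    simpa using hE.const_add (F y)
  rw [← hadd.limsup_eq]
  exact limsup_le_limsup (Eventually.of_forall fun k => le_add_tsub)
end

section
/- Assume a sequence of metric spaces (X_i)_{i∈ℕ} and a metric space X have an asymptotic relation, that each X_i is a complete CAT(0) space, and that X is a geodesic space. Then condition (G) holds: whenever γ_i : [0,1] → X_i and γ : [0,1] → X are geodesics with γ_i(0) → γ(0) and γ_i(1) → γ(1) in 𝒳, one has γ_i(t) → γ(t) in 𝒳 for every t ∈ [0,1]; moreover X is a CAT(0) space. -/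
/-!
In a CAT(0) space the midpoint inequality upgrades to the comparison inequality
`d(p, γ t)² ≤ (1 - t) d(p, γ 0)² + t d(p, γ 1)² - t (1 - t) d(γ 0, γ 1)²` along every geodesic
(`Cat0.comparison`). Its right-hand side depends only on distances to the endpoints, and it vanishes
when `p` is at distances `t L` and `(1 - t) L` from endpoints at distance `L`.

Condition (G) follows: approximate `γ t` by points `x i` of `X i`, use them as `p` in the comparison
inequality for `γ' i`, and pass to the limit. Distances converge to those of `γ`, so
`d(x i, γ' i t) → 0`, and (A4) gives `γ' i t → γ t`. The same estimate at the midpoint shows that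
midpoints in `X i` converge to any prescribed midpoint in `Y` (`convTo_midpoint`), so the midpoint
inequality passes to the limit and `Y` is CAT(0).
-/

open Filter Topology Metric Set ENNReal

universe u v

/-- A geodesic (with affine parametrization on `[0,1]`). -/
def IsGeod {Z : Type*} [MetricSpace Z] (γ : ℝ → Z) : Prop :=
  ∀ s ∈ Set.Icc (0:ℝ) 1, ∀ t ∈ Set.Icc (0:ℝ) 1,
    dist (γ s) (γ t) = |s - t| * dist (γ 0) (γ 1)

/-- A geodesic metric space: any two points are joined by a geodesic. -/
def GeodesicSpace (Z : Type*) [MetricSpace Z] : Prop :=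
  ∀ x y : Z, ∃ γ : ℝ → Z, IsGeod γ ∧ γ 0 = x ∧ γ 1 = y

/-- The CAT(0) property: existence of midpoints together with the comparison
inequality `d(p,m)² ≤ d(p,x)²/2 + d(p,y)²/2 − d(x,y)²/4` for all midpoints `m`. -/
def Cat0 (Z : Type*) [MetricSpace Z] : Prop :=
  (∀ x y : Z, ∃ m : Z, dist x m = dist x y / 2 ∧ dist m y = dist x y / 2) ∧
  (∀ p x y m : Z, dist x m = dist x y / 2 → dist m y = dist x y / 2 →
    dist p m ^ 2 ≤ dist p x ^ 2 / 2 + dist p y ^ 2 / 2 - dist x y ^ 2 / 4)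

/-- Convexity along all geodesics of a `[0,∞]`-valued function. -/
def ConvexFun {Z : Type*} [MetricSpace Z] (E : Z → ℝ≥0∞) : Prop :=
  ∀ γ : ℝ → Z, IsGeod γ → ∀ t ∈ Set.Icc (0:ℝ) 1,
    E (γ t) ≤ ENNReal.ofReal (1 - t) * E (γ 0) + ENNReal.ofReal t * E (γ 1)

/-- A function on `[0,1]` that is bounded above, midpoint convex and nonpositive at the endpoints
is nonpositive. Every point is the midpoint of an endpoint and another point of `[0,1]`, so an upper
bound `C` improves to `C / 2`; iterating gives the claim without any continuity. -/
lemma nonpos_of_midpoint_convex (g : ℝ → ℝ) (C : ℝ) (hC : ∀ t ∈ Set.Icc (0:ℝ) 1, g t ≤ C)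
    (h0 : g 0 ≤ 0) (h1 : g 1 ≤ 0)
    (hmid : ∀ s ∈ Set.Icc (0:ℝ) 1, ∀ t ∈ Set.Icc (0:ℝ) 1, g ((s + t) / 2) ≤ (g s + g t) / 2) :
    ∀ t ∈ Set.Icc (0:ℝ) 1, g t ≤ 0 := by
  have key : ∀ n : ℕ, ∀ t ∈ Set.Icc (0:ℝ) 1, g t ≤ C * (1 / 2) ^ n := by
    intro n
    induction n with
    | zero => simpa using hC
    | succ n ih =>
      intro t ht
      have hpow : C * (1 / 2 : ℝ) ^ (n + 1) = C * (1 / 2) ^ n / 2 := by ring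
      rw [hpow]
      rcases le_total t (1 / 2) with h | h
      · have ht' : 2 * t ∈ Set.Icc (0:ℝ) 1 := ⟨by linarith [ht.1], by linarith⟩
        have hm := hmid 0 (by simp) (2 * t) ht'
        rw [show (0 + 2 * t) / 2 = t by ring] at hm
        linarith [ih _ ht']
      · have ht' : 2 * t - 1 ∈ Set.Icc (0:ℝ) 1 := ⟨by linarith, by linarith [ht.2]⟩
        have hm := hmid (2 * t - 1) ht' 1 (by simp)
        rw [show (2 * t - 1 + 1) / 2 = t by ring] at hm
        linarith [ih _ ht']
  intro t ht
  have hlim : Tendsto (fun n : ℕ => C * (1 / 2 : ℝ) ^ n) atTop (𝓝 (C * 0)) :=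
    (_root_.tendsto_pow_atTop_nhds_zero_of_lt_one (by norm_num) (by norm_num)).const_mul C
  rw [mul_zero] at hlim
  exact ge_of_tendsto' hlim fun n => key n t ht

/-- The CAT(0) comparison inequality along a geodesic, at an arbitrary parameter. -/
lemma Cat0.comparison {Z : Type*} [MetricSpace Z] (hZ : Cat0 Z) {γ : ℝ → Z} (hγ : IsGeod γ)
    (p : Z) {t : ℝ} (ht : t ∈ Set.Icc (0:ℝ) 1) :
    dist p (γ t) ^ 2 ≤ (1 - t) * dist p (γ 0) ^ 2 + t * dist p (γ 1) ^ 2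
      - t * (1 - t) * dist (γ 0) (γ 1) ^ 2 := by
  set a := dist p (γ 0) with ha
  set b := dist p (γ 1) with hb
  set L := dist (γ 0) (γ 1) with hL
  have hL0 : 0 ≤ L := dist_nonneg
  -- The deficit in the inequality is midpoint convex because the term `t * (1 - t) * L ^ 2` is
  -- exactly as concave as the CAT(0) midpoint inequality allows.
  have := nonpos_of_midpoint_convex
    (fun t => dist p (γ t) ^ 2 - ((1 - t) * a ^ 2 + t * b ^ 2 - t * (1 - t) * L ^ 2))
    ((a + L) ^ 2 + L ^ 2) ?_ ?_ ?_ ?_ t ht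
  · simpa using this
  · intro s hs
    obtain ⟨hs0, hs1⟩ := hs
    have h := hγ 0 (by simp) s ⟨hs0, hs1⟩
    rw [zero_sub, abs_neg, abs_of_nonneg hs0, ← hL] at h
    have hd : dist p (γ s) ≤ a + L := by
      have := dist_triangle p (γ 0) (γ s)
      nlinarith
    have hd2 : dist p (γ s) ^ 2 ≤ (a + L) ^ 2 := by gcongr
    have e1 : 0 ≤ (1 - s) * a ^ 2 := mul_nonneg (by linarith) (sq_nonneg a)
    have e2 : 0 ≤ s * b ^ 2 := mul_nonneg hs0 (sq_nonneg b)
    have e3 : s * (1 - s) * L ^ 2 ≤ 1 * L ^ 2 :=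
      mul_le_mul_of_nonneg_right (by nlinarith) (sq_nonneg L)
    linarith
  · simp [ha]
  · simp [hb]
  · intro s hs u hu
    have hm : (s + u) / 2 ∈ Set.Icc (0:ℝ) 1 :=
      ⟨by linarith [hs.1, hu.1], by linarith [hs.2, hu.2]⟩
    have hsu := hγ s hs u hu
    have hsm : dist (γ s) (γ ((s + u) / 2)) = dist (γ s) (γ u) / 2 := by
      rw [hγ s hs _ hm, hsu, show s - (s + u) / 2 = (s - u) / 2 by ring, abs_div, abs_two]
      ring
    have hmu : dist (γ ((s + u) / 2)) (γ u) = dist (γ s) (γ u) / 2 := by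
      rw [hγ _ hm u hu, hsu, show (s + u) / 2 - u = (s - u) / 2 by ring, abs_div, abs_two]
      ring
    have h := hZ.2 p _ _ _ hsm hmu
    rw [hsu, mul_pow, sq_abs, ← hL] at h
    linarith

section

variable {X : ℕ → Type u} {Y : Type v} [∀ i, MetricSpace (X i)] [MetricSpace Y]
  {T : TopologicalSpace ((Σ i, X i) ⊕ Y)}

/-- A squared-distance form of (A4). -/
lemma AsymptoticRelation.conv_of_sq_le (hT : AsymptoticRelation X Y T) {x y : ∀ i, X i} {a : Y}
    (hx : ConvTo X Y T x a) {B : ℕ → ℝ} (hB : Tendsto B atTop (𝓝 0))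
    (h : ∀ i, dist (x i) (y i) ^ 2 ≤ B i) : ConvTo X Y T y a := by
  refine hT.close_conv x y a hx ?_
  have h2 : Tendsto (fun i => dist (x i) (y i) ^ 2) atTop (𝓝 0) :=
    squeeze_zero (fun i => sq_nonneg _) h hB
  have h3 := h2.sqrt
  simpa [Real.sqrt_sq dist_nonneg] using h3

/-- Midpoints in the `X i` of convergent sequences converge to any midpoint of the limits. -/
lemma convTo_midpoint (hT : AsymptoticRelation X Y T) (hcat : ∀ i, Cat0 (X i))
    {x y m : ∀ i, X i} {a b c : Y} (hx : ConvTo X Y T x a) (hy : ConvTo X Y T y b)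
    (hxm : ∀ i, dist (x i) (m i) = dist (x i) (y i) / 2)
    (hmy : ∀ i, dist (m i) (y i) = dist (x i) (y i) / 2)
    (hac : dist a c = dist a b / 2) (hcb : dist c b = dist a b / 2) : ConvTo X Y T m c := by
  obtain ⟨z, hz⟩ := hT.exists_approx c
  refine hT.conv_of_sq_le hz ?_ fun i => (hcat i).2 (z i) _ _ _ (hxm i) (hmy i)
  have h := ((((hT.dist_conv _ _ _ _ hz hx).pow 2).div_const 2).add
    (((hT.dist_conv _ _ _ _ hz hy).pow 2).div_const 2)).sub
    (((hT.dist_conv _ _ _ _ hx hy).pow 2).div_const 4)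
  convert h using 2
  rw [dist_comm c a, hac, hcb]
  ring

end

/-- If the `X i` are complete CAT(0) spaces and `Y` is a geodesic space with an
asymptotic relation to them, then geodesics converge pointwise to geodesics
(condition (G)) and `Y` is CAT(0). -/
theorem stmt_14 (X : ℕ → Type u) (Y : Type v)
    [∀ i, MetricSpace (X i)] [MetricSpace Y]
    [∀ i, CompleteSpace (X i)]
    (T : TopologicalSpace ((Σ i, X i) ⊕ Y))
    (hT : AsymptoticRelation X Y T)
    (hcat : ∀ i, Cat0 (X i)) (hgeo : GeodesicSpace Y) :
    (∀ (γ' : ∀ i, ℝ → X i) (γ : ℝ → Y),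
      (∀ i, IsGeod (γ' i)) → IsGeod γ →
      ConvTo X Y T (fun i => γ' i 0) (γ 0) →
      ConvTo X Y T (fun i => γ' i 1) (γ 1) →
      ∀ t ∈ Set.Icc (0:ℝ) 1, ConvTo X Y T (fun i => γ' i t) (γ t)) ∧
    Cat0 Y := by
  refine ⟨?_, ?_, ?_⟩
  · intro γ' γ hγ' hγ h0 h1 t ht
    obtain ⟨x, hx⟩ := hT.exists_approx (γ t)
    refine hT.conv_of_sq_le hx ?_ fun i => (hcat i).comparison (hγ' i) (x i) ht
    have h := ((((hT.dist_conv _ _ _ _ hx h0).pow 2).const_mul (1 - t)).add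
      (((hT.dist_conv _ _ _ _ hx h1).pow 2).const_mul t)).sub
      (((hT.dist_conv _ _ _ _ h0 h1).pow 2).const_mul (t * (1 - t)))
    convert h using 2
    rw [hγ t ht 0 (by simp), hγ t ht 1 (by simp), mul_pow, mul_pow, sq_abs, sq_abs]
    ring
  · intro x y
    obtain ⟨γ, hγ, rfl, rfl⟩ := hgeo x y
    refine ⟨γ (1 / 2), ?_, ?_⟩
    · rw [hγ 0 (by simp) (1 / 2) (by constructor <;> norm_num)]
      norm_num [abs_of_pos]
      ring
    · rw [hγ (1 / 2) (by constructor <;> norm_num) 1 (by simp)]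
      norm_num [abs_of_pos]
      ring
  · intro p a b c hac hcb
    obtain ⟨q, hq⟩ := hT.exists_approx p
    obtain ⟨x, hx⟩ := hT.exists_approx a
    obtain ⟨y, hy⟩ := hT.exists_approx b
    choose m hxm hmy using fun i => (hcat i).1 (x i) (y i)
    have hm := convTo_midpoint hT hcat hx hy hxm hmy hac hcb
    exact le_of_tendsto_of_tendsto' ((hT.dist_conv _ _ _ _ hq hm).pow 2)
      (((((hT.dist_conv _ _ _ _ hq hx).pow 2).div_const 2).add
        (((hT.dist_conv _ _ _ _ hq hy).pow 2).div_const 2)).sub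
        (((hT.dist_conv _ _ _ _ hx hy).pow 2).div_const 4))
      fun i => (hcat i).2 (q i) _ _ _ (hxm i) (hmy i)
end

section
/- Let (H_i)_{i∈ℕ} and H be complete separable CAT(0) spaces with an asymptotic relation between them, and let E_i : H_i → [0,+∞] and E : H → [0,+∞] be lower semicontinuous convex functions, none identically +∞. Suppose that for every λ > 0 the Moreau–Yosida approximations converge strongly: for every sequence x_i ∈ H_i converging in 𝒳 to x ∈ H, E_i^λ(x_i) → E^λ(x). Then E_i Γ-converges to E. -/
/-!
Testing the infimum with `y = x` gives `E_i^λ(x_i) ≤ λ E_i(x_i)`, so strong convergence yields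
`liminf E_i(x_i) ≥ E^λ(x) / λ` for every `λ > 0`; lower semicontinuity of `E` makes the right-hand
side exceed any `c < E(x)` for small `λ` (`exists_mul_le_moreauYosida`). This is (Γ2).

For (Γ1) only `E(x) < ∞` matters, since otherwise (Γ2) forces convergence to `∞` along any
approximating sequence. Almost minimizers `z` of `λ E_i(z) + d(x_i, z)²` have value below
`λ (E(x) + λ)` for large `i`, hence `E_i(z) ≤ E(x) + λ` and `d(x_i, z)² ≤ λ (E(x) + λ)`. Thus the
infimum over `z` of the defect `(E_i(z) - E(x)) + d(x_i, z)` (truncated difference) tends to `0`,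
and points `z_i` nearly attaining this infimum form a recovery sequence by (A4).
-/

open Filter Topology Metric Set ENNReal

universe u v

/-- The Moreau-Yosida approximation `E^λ(x) = inf_y (λ E(y) + d(x,y)²)`. -/
noncomputable def MoreauYosida {Z : Type*} [MetricSpace Z]
    (lam : ℝ) (E : Z → ℝ≥0∞) (x : Z) : ℝ≥0∞ :=
  ⨅ y : Z, (ENNReal.ofReal lam * E y + ENNReal.ofReal (dist x y ^ 2))

theorem moreauYosida_le_mul {Z : Type*} [MetricSpace Z] (lam : ℝ) (E : Z → ℝ≥0∞) (x : Z) :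
    MoreauYosida lam E x ≤ ENNReal.ofReal lam * E x := by
  refine (iInf_le _ x).trans ?_
  simp

/-- Lower semicontinuity gives `sup_{λ > 0} E^λ(y) / λ ≥ E(y)`: points near `y` have energy above
`c`, and for small `λ` the quadratic term alone exceeds `λ c` at the remaining points. -/
theorem exists_mul_le_moreauYosida {Z : Type*} [MetricSpace Z] {E : Z → ℝ≥0∞}
    (hE : LowerSemicontinuous E) {y : Z} {c : ℝ≥0∞} (hc : c < E y) :
    ∃ lam : ℝ, 0 < lam ∧ ENNReal.ofReal lam * c ≤ MoreauYosida lam E y := by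
  obtain ⟨δ, hδ, hball⟩ := Metric.eventually_nhds_iff.1 (hE y c hc)
  have hctop : c ≠ ⊤ := hc.ne_top
  have hc0 : 0 ≤ c.toReal := ENNReal.toReal_nonneg
  refine ⟨δ ^ 2 / (c.toReal + 1), by positivity, le_iInf fun z => ?_⟩
  by_cases hz : dist z y < δ
  · calc _ ≤ ENNReal.ofReal (δ ^ 2 / (c.toReal + 1)) * E z := by gcongr; exact (hball hz).le
      _ ≤ _ := le_self_add
  · refine le_trans ?_ le_add_self
    rw [← ENNReal.ofReal_toReal hctop, ← ENNReal.ofReal_mul (by positivity),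
      ENNReal.toReal_ofReal hc0]
    apply ENNReal.ofReal_le_ofReal
    rw [dist_comm y z]
    calc δ ^ 2 / (c.toReal + 1) * c.toReal ≤ δ ^ 2 := by
          rw [div_mul_eq_mul_div, div_le_iff₀ (by positivity)]
          nlinarith [sq_nonneg δ]
      _ ≤ dist z y ^ 2 := by
          gcongr
          exact not_lt.1 hz

/-- If `E^λ(x) < λ (a + λ)` with `λ` small compared with `ε`, then some point within `ε / 2` of
`x` has energy at most `a + ε / 2`. -/
theorem iInf_defect_le {Z : Type*} [MetricSpace Z] {E : Z → ℝ≥0∞} {x : Z} {a ε lam : ℝ}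
    (ha : 0 ≤ a) (hε : 0 < ε) (hlam : 0 < lam) (h1 : lam ≤ ε / 2)
    (h2 : lam * (a + lam) ≤ (ε / 2) ^ 2)
    (h : MoreauYosida lam E x < ENNReal.ofReal (lam * (a + lam))) :
    ⨅ z, ((E z - ENNReal.ofReal a) + edist x z) ≤ ENNReal.ofReal ε := by
  obtain ⟨z, hz⟩ := iInf_lt_iff.1 h
  refine iInf_le_of_le z ?_
  have hE : E z ≤ ENNReal.ofReal (a + lam) := by
    have := (le_self_add.trans hz.le)
    rw [ENNReal.ofReal_mul hlam.le] at this
    exact (ENNReal.mul_le_mul_iff_right (by simpa using hlam) ENNReal.ofReal_ne_top).1 this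
  have hd : dist x z ≤ ε / 2 := by
    have := (le_add_self.trans hz.le)
    rw [ENNReal.ofReal_le_ofReal_iff (by positivity)] at this
    exact abs_le_of_sq_le_sq' (this.trans h2) (by positivity) |>.2
  calc E z - ENNReal.ofReal a + edist x z
      ≤ ENNReal.ofReal (ε / 2) + ENNReal.ofReal (ε / 2) := by
        gcongr
        · rw [tsub_le_iff_right, ← ENNReal.ofReal_add (by positivity) ha]
          exact hE.trans (ENNReal.ofReal_le_ofReal (by linarith))
        · rw [edist_dist]
          exact ENNReal.ofReal_le_ofReal hd
    _ = ENNReal.ofReal ε := by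
        rw [← ENNReal.ofReal_add (by positivity) (by positivity), add_halves]

/-- If the Moreau-Yosida approximations `E_i^λ` converge strongly to `E^λ` for every
`λ > 0`, then `E_i` Γ-converges to `E` (on complete separable CAT(0) spaces, for lower
semicontinuous convex functionals not identically `+∞`). -/
theorem stmt_16 (X : ℕ → Type u) (Y : Type v)
    [∀ i, MetricSpace (X i)] [MetricSpace Y]
    [∀ i, CompleteSpace (X i)] [CompleteSpace Y]
    [∀ i, TopologicalSpace.SeparableSpace (X i)] [TopologicalSpace.SeparableSpace Y]
    (hcat : ∀ i, Cat0 (X i)) (hcatY : Cat0 Y)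
    (T : TopologicalSpace ((Σ i, X i) ⊕ Y))
    (hT : AsymptoticRelation X Y T)
    (E : ∀ i, X i → ℝ≥0∞) (F : Y → ℝ≥0∞)
    (hlsc : ∀ i, LowerSemicontinuous (E i)) (hlscF : LowerSemicontinuous F)
    (hconv : ∀ i, ConvexFun (E i)) (hconvF : ConvexFun F)
    (hne : ∀ i, ∃ x : X i, E i x ≠ ⊤) (hneF : ∃ y : Y, F y ≠ ⊤)
    (hMY : ∀ lam : ℝ, 0 < lam → ∀ (x : ∀ i, X i) (y : Y), ConvTo X Y T x y →
      Tendsto (fun i => MoreauYosida lam (E i) (x i)) atTop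
        (nhds (MoreauYosida lam F y))) :
    GammaConv X Y T E F := by
  have liminf_ineq : ∀ (x : ∀ i, X i) (y : Y), ConvTo X Y T x y →
      F y ≤ atTop.liminf fun i => E i (x i) := by
    intro x y hxy
    refine le_of_forall_lt fun c hc => ?_
    obtain ⟨c', hcc', hc'⟩ := exists_between hc
    obtain ⟨c'', hcc'', hc''⟩ := exists_between hc'
    obtain ⟨lam, hlam, hle⟩ := exists_mul_le_moreauYosida hlscF hc''
    refine hcc'.trans_le (le_liminf_of_le (by isBoundedDefault) ?_)
    have hlt : ENNReal.ofReal lam * c' < MoreauYosida lam F y :=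
      lt_of_lt_of_le (ENNReal.mul_lt_mul_right (by simpa using hlam) ENNReal.ofReal_ne_top hcc'') hle
    filter_upwards [(hMY lam hlam x y hxy).eventually_const_lt hlt] with i hi
    exact (ENNReal.mul_le_mul_iff_right (by simpa using hlam) ENNReal.ofReal_ne_top).1
      (hi.le.trans (moreauYosida_le_mul lam (E i) (x i)))
  refine ⟨fun y => ?_, liminf_ineq⟩
  obtain ⟨x, hx⟩ := hT.exists_approx y
  by_cases hFy : F y = ⊤
  · refine ⟨x, hx, tendsto_of_le_liminf_of_limsup_le (liminf_ineq x y hx) ?_⟩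
    rw [hFy]
    exact le_top
  set a := (F y).toReal with ha
  have ha0 : 0 ≤ a := ENNReal.toReal_nonneg
  have haF : ENNReal.ofReal a = F y := ENNReal.ofReal_toReal hFy
  have hdefect : Tendsto (fun i => ⨅ z, ((E i z - ENNReal.ofReal a) + edist (x i) z)) atTop
      (𝓝 0) := by
    rw [ENNReal.tendsto_nhds_zero]
    intro ε' hε'
    obtain ⟨ε, hε, hεle⟩ : ∃ ε : ℝ, 0 < ε ∧ ENNReal.ofReal ε ≤ ε' := by
      obtain ⟨r, hr0, hr⟩ := ENNReal.lt_iff_exists_nnreal_btwn.1 hε'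
      exact ⟨r, by exact_mod_cast hr0, by simpa using hr.le⟩
    obtain ⟨lam, hlam, h1, h2⟩ : ∃ lam : ℝ, 0 < lam ∧ lam ≤ ε / 2 ∧
        lam * (a + lam) ≤ (ε / 2) ^ 2 := by
      have hcont : Tendsto (fun l : ℝ => l * (a + l)) (𝓝[>] 0) (𝓝 0) := by
        have : Continuous fun l : ℝ => l * (a + l) := by fun_prop
        simpa using (this.tendsto 0).mono_left nhdsWithin_le_nhds
      have hev1 := hcont.eventually_le_const (show (0 : ℝ) < (ε / 2) ^ 2 by positivity)
      have hev2 : ∀ᶠ l : ℝ in 𝓝[>] 0, l ∈ Set.Ioc 0 (ε / 2) :=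
        Ioc_mem_nhdsGT (by positivity)
      obtain ⟨l, hl1, hl2⟩ := (hev1.and hev2).exists
      exact ⟨l, hl2.1, hl2.2, hl1⟩
    have hlt : MoreauYosida lam F y < ENNReal.ofReal (lam * (a + lam)) := by
      refine (moreauYosida_le_mul lam F y).trans_lt ?_
      rw [← haF, ← ENNReal.ofReal_mul hlam.le, ENNReal.ofReal_lt_ofReal_iff (by positivity)]
      gcongr
      linarith
    filter_upwards [(hMY lam hlam x y hx).eventually_lt_const hlt] with i hi
    exact (iInf_defect_le ha0 hε hlam h1 h2 hi).trans hεle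
  -- A tolerance `1 / (i + 1)` is added, as the infimum of the defect need not be attained.
  have hchoice : ∀ i, ∃ z, (E i z - ENNReal.ofReal a) + edist (x i) z ≤
      (⨅ z, ((E i z - ENNReal.ofReal a) + edist (x i) z)) + ENNReal.ofReal (1 / ((i : ℝ) + 1)) := by
    intro i
    by_cases htop : (⨅ z, ((E i z - ENNReal.ofReal a) + edist (x i) z)) = ⊤
    · exact ⟨x i, by rw [htop, top_add]; exact le_top⟩
    · obtain ⟨z, hz⟩ := iInf_lt_iff.1 (ENNReal.lt_add_right htop
        (ENNReal.ofReal_pos.2 (show 0 < 1 / ((i : ℝ) + 1) by positivity)).ne')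
      exact ⟨z, hz.le⟩
  choose z hz using hchoice
  have hz0 : Tendsto (fun i => (E i (z i) - ENNReal.ofReal a) + edist (x i) (z i)) atTop
      (𝓝 0) := by
    refine tendsto_of_tendsto_of_tendsto_of_le_of_le tendsto_const_nhds ?_
      (fun _ => zero_le) hz
    have := hdefect.add (ENNReal.tendsto_ofReal tendsto_one_div_add_atTop_nhds_zero_nat)
    simpa using this
  have hzy : ConvTo X Y T z y := by
    refine hT.close_conv x z y hx ?_
    have hed : Tendsto (fun i => edist (x i) (z i)) atTop (𝓝 0) :=
      tendsto_of_tendsto_of_tendsto_of_le_of_le tendsto_const_nhds hz0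
        (fun _ => zero_le) fun _ => le_add_self
    simpa [Function.comp_def, edist_dist] using (ENNReal.tendsto_toReal ENNReal.zero_ne_top).comp hed
  refine ⟨z, hzy, tendsto_of_le_liminf_of_limsup_le (liminf_ineq z y hzy) ?_⟩
  have hlim : Tendsto (fun i => ((E i (z i) - ENNReal.ofReal a) + edist (x i) (z i)) + F y) atTop
      (𝓝 (F y)) := by
    simpa using hz0.add_const (F y)
  rw [← hlim.limsup_eq]
  refine limsup_le_limsup (Eventually.of_forall fun i => ?_)
  rw [haF]
  calc E i (z i) ≤ (E i (z i) - F y) + F y := le_tsub_add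
    _ ≤ _ := add_le_add_left le_self_add _
end
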